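/- Fix a vector v ∈ ℝ^N and for i ∈ [N] let y_iᵀ = (v_i, b_iᵀ) where b_1,…,b_N are i.i.d. N(0, (1/N) I_{n−1}) Gaussian vectors. Define the n×n matrix M := Σ_{i=1}^N (‖y_i‖² − (n−1)/N) y_i y_iᵀ − (3/N) I_n. There exists a universal constant C > 0 such that for every δ ∈ (0,1), defining η := C( (‖v‖+1)·n√(log(N/δ))/N^{3/2} + ‖v‖₄²·√(n·log(N/δ))/N + ‖v‖₆³·(√n+√(log(N/δ)))/√N + ‖v‖_∞²·(n·log(N/δ)+log²(N/δ))/N + (n·log(N/δ))^{3/2}/N² + |‖v‖²−1|/N ), if N ≥ log⁷(N/δ) then with probability at least 1−δ, ‖M − (‖v‖₄⁴ − 3/N) e₁e₁ᵀ‖ ≤ η, where e₁ is the first standard basis vector of ℝ^n and ‖·‖ on matrices denotes the spectral norm. -/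

import Mathlib

open MeasureTheory ProbabilityTheory Matrix

/-- Euclidean norm of a vector in `ℝ^k`. -/
noncomputable def eucNorm {k : ℕ} (v : Fin k → ℝ) : ℝ := Real.sqrt (∑ i, (v i) ^ 2)

/-- ℓ_p norm of a vector in `ℝ^k`. -/
noncomputable def lpNorm {k : ℕ} (p : ℝ) (v : Fin k → ℝ) : ℝ := (∑ i, |v i| ^ p) ^ (1 / p)

/-- Supremum (ℓ_∞) norm of a vector in `ℝ^k`. -/
noncomputable def supNorm {k : ℕ} (v : Fin k → ℝ) : ℝ := ⨆ i, |v i|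

/-- Spectral (ℓ₂ operator) norm of a real matrix. -/
noncomputable def specNorm {m k : ℕ} (M : Matrix (Fin m) (Fin k) ℝ) : ℝ :=
  ‖LinearMap.toContinuousLinearMap (Matrix.toEuclideanLin M)‖

/-- The Gaussian measure `N(0, σ2 · I_k)` on `ℝ^k`. -/
noncomputable def gaussVec (k : ℕ) (σ2 : NNReal) : Measure (Fin k → ℝ) :=
  Measure.pi fun _ => gaussianReal 0 σ2

instance (k : ℕ) (σ2 : NNReal) : IsProbabilityMeasure (gaussVec k σ2) := by
  unfold gaussVec; infer_instance

/-- The law of `N` i.i.d. samples from `N(0, σ2 · I_k)`. -/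
noncomputable def iidGaussVec (N k : ℕ) (σ2 : NNReal) : Measure (Fin N → Fin k → ℝ) :=
  Measure.pi fun _ => gaussVec k σ2

/-- Concatenation `(a, bᵀ)ᵀ ∈ ℝ^n` of a scalar `a` with a vector `b ∈ ℝ^{n-1}`. -/
noncomputable def rowCat {n : ℕ} (a : ℝ) (b : Fin (n - 1) → ℝ) : Fin n → ℝ :=
  fun j => if h : (j : ℕ) = 0 then a else b ⟨(j : ℕ) - 1, by have := j.isLt; omega⟩

/-- The `N × n` matrix whose rows are `y_iᵀ = (v_i, b_iᵀ)`, i.e. whose first column is `v`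
and whose remaining `n - 1` columns are given by `B`. -/
noncomputable def gaussBasis {N n : ℕ} (v : Fin N → ℝ) (B : Fin N → Fin (n - 1) → ℝ) :
    Matrix (Fin N) (Fin n) ℝ :=
  Matrix.of fun i => rowCat (v i) (B i)

/-- The matrix `M(Y) = ∑_i (‖y_i‖² - (n-1)/N) y_i y_iᵀ - (3/N) I_n` built from the rows
`y_iᵀ` of `Y`. -/
noncomputable def specMat {N n : ℕ} (Y : Matrix (Fin N) (Fin n) ℝ) :
    Matrix (Fin n) (Fin n) ℝ :=
  (∑ i, ((∑ j, (Y i j) ^ 2) - ((n : ℝ) - 1) / N) • Matrix.vecMulVec (Y i) (Y i))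
    - ((3 : ℝ) / N) • (1 : Matrix (Fin n) (Fin n) ℝ)

/-- First standard basis vector of `ℝ^n`. -/
noncomputable def e1vec (n : ℕ) : Fin n → ℝ := fun j => if (j : ℕ) = 0 then 1 else 0

/-- The quantity `η = η(N, n, v, δ)` with universal constant `C`. -/
noncomputable def etaBound (C : ℝ) (N n : ℕ) (v : Fin N → ℝ) (δ : ℝ) : ℝ :=
  C * ((eucNorm v + 1) * n * Real.sqrt (Real.log (N / δ)) / (N : ℝ) ^ ((3 : ℝ) / 2)
    + lpNorm 4 v ^ 2 * Real.sqrt (n * Real.log (N / δ)) / N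
    + lpNorm 6 v ^ 3 * (Real.sqrt n + Real.sqrt (Real.log (N / δ))) / Real.sqrt N
    + supNorm v ^ 2 * (n * Real.log (N / δ) + (Real.log (N / δ)) ^ 2) / N
    + (n * Real.log (N / δ)) ^ ((3 : ℝ) / 2) / (N : ℝ) ^ 2
    + |eucNorm v ^ 2 - 1| / N)

lemma exists_chernoff_parameter {K V R : ℝ} (hK : 0 < K) (hV : 0 ≤ V) (hR : 0 < R) :
    ∃ l : ℝ, 0 < l ∧ l * R ≤ 1 ∧ l * V + K / l ≤ 2 * √(K * V) + K * R := by
  by_cases h : V ≤ K * R ^ 2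
  · refine ⟨1 / R, by positivity, by field_simp; rfl, ?_⟩
    have h1 : 1 / R * V ≤ √(K * V) := by
      apply Real.le_sqrt_of_sq_le
      rw [mul_pow, div_pow, one_pow, div_mul_eq_mul_div, div_le_iff₀ (by positivity)]
      nlinarith
    have h2 : K / (1 / R) = K * R := by field_simp
    have := Real.sqrt_nonneg (K * V)
    linarith
  · push Not at h
    have hV' : 0 < V := lt_of_le_of_lt (by positivity) h
    have hs : √(K * V) = √K * √V := Real.sqrt_mul hK.le V
    have hK2 := Real.sq_sqrt hK.le
    have hV2 := Real.sq_sqrt hV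
    have hKp := Real.sqrt_pos.2 hK
    have hVp := Real.sqrt_pos.2 hV'
    refine ⟨√K / √V, by positivity, ?_, ?_⟩
    · rw [div_mul_eq_mul_div, div_le_one hVp]
      apply Real.le_sqrt_of_sq_le
      rw [mul_pow, hK2]
      exact h.le
    · have h1 : √K / √V * V = √K * √V := by
        rw [div_mul_eq_mul_div, div_eq_iff hVp.ne', mul_assoc, Real.mul_self_sqrt hV]
      have h2 : K / (√K / √V) = √K * √V := by
        rw [div_div_eq_mul_div, div_eq_iff hKp.ne']
        nlinarith
      rw [h1, h2, hs]
      have : 0 ≤ K * R := by positivity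
      linarith

lemma measure_inter_ge_le_of_mgf_le {Ω : Type*} [MeasurableSpace Ω] {μ : Measure Ω}
    [IsProbabilityMeasure μ] {X : Ω → ℝ} {G : Set Ω} {m V R K : ℝ}
    (hK : 0 < K) (hV : 0 ≤ V) (hR : 0 < R)
    (H : ∀ l : ℝ, 0 < l → l * R ≤ 1 → Integrable (G.indicator fun x => Real.exp (l * X x)) μ ∧
      ∫ x, G.indicator (fun x => Real.exp (l * X x)) x ∂μ ≤ Real.exp (l * m + l ^ 2 * V)) :
    μ (G ∩ {x | m + 2 * √(K * V) + K * R ≤ X x}) ≤ ENNReal.ofReal (Real.exp (-K)) := by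
  obtain ⟨l, hl, hlR, hle⟩ := exists_chernoff_parameter hK hV hR
  obtain ⟨hint, hb⟩ := H l hl hlR
  set t := m + 2 * √(K * V) + K * R with ht
  have hnn : 0 ≤ᵐ[μ] G.indicator fun x => Real.exp (l * X x) :=
    Filter.Eventually.of_forall fun x => Set.indicator_nonneg (fun _ _ => (Real.exp_pos _).le) x
  have hM := mul_meas_ge_le_integral_of_nonneg hnn hint (Real.exp (l * t))
  have hsub : G ∩ {x | t ≤ X x} ⊆
      {x | Real.exp (l * t) ≤ G.indicator (fun x => Real.exp (l * X x)) x} := by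
    rintro x ⟨hx, hx'⟩
    simp only [Set.mem_ofPred_eq, Set.indicator_of_mem hx] at hx' ⊢
    gcongr
  have h3 : Real.exp (l * t) * Real.exp (-K) ≥ Real.exp (l * m + l ^ 2 * V) := by
    rw [← Real.exp_add]
    apply Real.exp_le_exp.2
    have : l * (l * V + K / l) ≤ l * (2 * √(K * V) + K * R) := by gcongr
    have h4 : l * (K / l) = K := by field_simp
    rw [ht]
    nlinarith
  have h5 : μ.real {x | Real.exp (l * t) ≤ G.indicator (fun x => Real.exp (l * X x)) x}
      ≤ Real.exp (-K) :=
    le_of_mul_le_mul_left (hM.trans (hb.trans h3)) (Real.exp_pos _)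
  refine (measure_mono hsub).trans ?_
  rw [← ofReal_measureReal]
  exact ENNReal.ofReal_le_ofReal h5

lemma measure_inter_gt_le_of_mgf_le {Ω : Type*} [MeasurableSpace Ω] {μ : Measure Ω}
    [IsProbabilityMeasure μ] {X : Ω → ℝ} {G : Set Ω} {m V R K : ℝ}
    (hK : 0 < K) (hV : 0 ≤ V) (hR : 0 ≤ R)
    (H : ∀ l : ℝ, 0 < l → l * R ≤ 1 → Integrable (G.indicator fun x => Real.exp (l * X x)) μ ∧
      ∫ x, G.indicator (fun x => Real.exp (l * X x)) x ∂μ ≤ Real.exp (l * m + l ^ 2 * V)) :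
    μ (G ∩ {x | m + 2 * √(K * V) + K * R < X x}) ≤ ENNReal.ofReal (Real.exp (-K)) := by
  set A : ℕ → Set Ω := fun k => G ∩ {x | m + 2 * √(K * V) + K * (R + 1 / (k + 1 : ℝ)) ≤ X x}
    with hA
  have hmono : Monotone A := by
    intro j k hjk x hx
    have h := hx.2
    simp only [Set.mem_ofPred_eq] at h
    refine ⟨hx.1, Set.mem_ofPred_eq .. ▸ le_trans ?_ h⟩
    gcongr
  have hunion : G ∩ {x | m + 2 * √(K * V) + K * R < X x} ⊆ ⋃ k, A k := by
    rintro x ⟨hx, hx'⟩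
    obtain ⟨k, hk⟩ := exists_nat_one_div_lt (K := ℝ) (ε := (X x - (m + 2 * √(K * V) + K * R)) / K)
      (div_pos (sub_pos.2 hx') hK)
    refine Set.mem_iUnion.2 ⟨k, hx, ?_⟩
    rw [lt_div_iff₀ hK] at hk
    simp only [Set.mem_ofPred_eq]
    nlinarith
  refine (measure_mono hunion).trans ?_
  rw [hmono.measure_iUnion]
  refine iSup_le fun k => measure_inter_ge_le_of_mgf_le hK hV (by positivity) fun l hl hlR => ?_
  refine H l hl (le_trans ?_ hlR)
  gcongr
  have : (0 : ℝ) ≤ 1 / (k + 1 : ℝ) := by positivity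
  linarith

/-- Restricted to the event `G`, the random variable `f` has a sub-exponential moment generating
function, centred at `m` up to the bias `e`. -/
def SubExpOn {α : Type*} [MeasurableSpace α] (γ : Measure α) (G : Set α) (f : α → ℝ)
    (m e V R : ℝ) : Prop :=
  ∀ s : ℝ, |s| * R ≤ 1 → Integrable (G.indicator fun x => Real.exp (s * f x)) γ ∧
    ∫ x, G.indicator (fun x => Real.exp (s * f x)) x ∂γ ≤ Real.exp (s * m + |s| * e + s ^ 2 * V)

namespace SubExpOn

lemma neg {α : Type*} [MeasurableSpace α] {γ : Measure α} {G : Set α} {f : α → ℝ} {m e V R : ℝ}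
    (H : SubExpOn γ G f m e V R) : SubExpOn γ G (fun x => -f x) (-m) e V R := by
  intro s hs
  have := H (-s) (by rwa [abs_neg])
  simpa using this

variable {α : Type*} [MeasurableSpace α] {γ : Measure α} [IsProbabilityMeasure γ] {G : Set α}
  {f : α → ℝ} {m e V R : ℝ} {ι : Type*} [Fintype ι]

lemma upper_tail (H : SubExpOn γ G f m e V R) (hV : 0 ≤ V) (hR : 0 ≤ R) (w : ι → ℝ) {W K : ℝ}
    (hK : 0 < K) (hW0 : 0 ≤ W) (hW : ∀ i, |w i| ≤ W) :
    Measure.pi (fun _ : ι => γ) ({x | ∀ i, x i ∈ G} ∩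
      {x | m * ∑ i, w i + e * ∑ i, |w i| + 2 * √(K * (V * ∑ i, w i ^ 2)) + K * (R * W)
        < ∑ i, w i * f (x i)}) ≤ ENNReal.ofReal (Real.exp (-K)) := by
  refine measure_inter_gt_le_of_mgf_le hK (by positivity) (by positivity) fun l hl hlR => ?_
  have hi : ∀ i, |l * w i| * R ≤ 1 := by
    intro i
    rw [abs_mul, abs_of_pos hl]
    calc l * |w i| * R ≤ l * W * R := by gcongr; exact hW i
      _ ≤ 1 := by linarith
  have hprod : ({x : ι → α | ∀ i, x i ∈ G}.indicator
      fun x => Real.exp (l * ∑ i, w i * f (x i))) =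
      fun x => ∏ i, G.indicator (fun y => Real.exp (l * w i * f y)) (x i) := by
    funext x
    by_cases hx : ∀ i, x i ∈ G
    · rw [Set.indicator_of_mem (by exact hx), Finset.mul_sum, Real.exp_sum]
      refine Finset.prod_congr rfl fun i _ => ?_
      rw [Set.indicator_of_mem (hx i), mul_assoc]
    · rw [Set.indicator_of_notMem (by exact hx)]
      push Not at hx
      obtain ⟨i, hi⟩ := hx
      rw [Finset.prod_eq_zero (Finset.mem_univ i)]
      exact Set.indicator_of_notMem hi _
  rw [hprod]
  refine ⟨Integrable.fintype_prod_dep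
    (f := fun i => G.indicator fun y => Real.exp (l * w i * f y)) fun i => (H _ (hi i)).1, ?_⟩
  rw [integral_fintype_prod_eq_prod (fun i => G.indicator fun y => Real.exp (l * w i * f y))]
  calc _ ≤ ∏ i, Real.exp (l * w i * m + |l * w i| * e + (l * w i) ^ 2 * V) := by
        refine Finset.prod_le_prod (fun i _ => integral_nonneg fun x =>
          Set.indicator_nonneg (fun _ _ => (Real.exp_pos _).le) x) fun i _ => (H _ (hi i)).2
    _ = _ := by
        rw [← Real.exp_sum]
        congr 1
        simp only [abs_mul, abs_of_pos hl, Finset.mul_sum, mul_add, ← Finset.sum_add_distrib]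
        exact Finset.sum_congr rfl fun i _ => by ring

lemma tail (H : SubExpOn γ G f m e V R) (hV : 0 ≤ V) (hR : 0 ≤ R) (w : ι → ℝ) {W K : ℝ}
    (hK : 0 < K) (hW0 : 0 ≤ W) (hW : ∀ i, |w i| ≤ W) :
    Measure.pi (fun _ : ι => γ) ({x | ∀ i, x i ∈ G} ∩
      {x | e * ∑ i, |w i| + 2 * √(K * (V * ∑ i, w i ^ 2)) + K * (R * W)
        < |∑ i, w i * f (x i) - m * ∑ i, w i|}) ≤ 2 * ENNReal.ofReal (Real.exp (-K)) := by
  have h1 := H.upper_tail hV hR w hK hW0 hW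
  have h2 := H.neg.upper_tail hV hR w hK hW0 hW
  rw [two_mul (ENNReal.ofReal _)]
  refine (measure_mono ?_).trans ((measure_union_le _ _).trans (add_le_add h1 h2))
  rintro x ⟨hx, hx'⟩
  simp only [Set.mem_ofPred_eq, lt_abs] at hx'
  rcases hx' with h | h
  · left
    refine ⟨hx, ?_⟩
    simp only [Set.mem_ofPred_eq]
    linarith
  · right
    refine ⟨hx, ?_⟩
    simp only [Set.mem_ofPred_eq, mul_neg, Finset.sum_neg_distrib]
    linarith

end SubExpOn

lemma integrable_exp_mul_sq_gaussianReal {c : ℝ} (hc : c < 1 / 2) :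
    Integrable (fun x => Real.exp (c * x ^ 2)) (gaussianReal 0 1) := by
  rw [gaussianReal_of_var_ne_zero 0 one_ne_zero,
    integrable_withDensity_iff_integrable_smul' (measurable_gaussianPDF 0 1)
      (Filter.Eventually.of_forall fun _ => gaussianPDF_lt_top)]
  have h := (integrable_exp_neg_mul_sq (show 0 < 1 / 2 - c by linarith)).const_mul
    ((√(2 * Real.pi))⁻¹)
  refine h.congr (Filter.Eventually.of_forall fun x => ?_)
  simp only [toReal_gaussianPDF, gaussianPDFReal, smul_eq_mul, NNReal.coe_one, mul_one, sub_zero]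
  rw [mul_assoc, ← Real.exp_add]
  congr 2
  ring

lemma integral_exp_mul_sq_gaussianReal {c : ℝ} (hc : c < 1 / 2) :
    ∫ x, Real.exp (c * x ^ 2) ∂gaussianReal 0 1 = (√(1 - 2 * c))⁻¹ := by
  rw [integral_gaussianReal_eq_integral_smul one_ne_zero]
  have : ∀ x : ℝ, gaussianPDFReal 0 1 x • Real.exp (c * x ^ 2) =
      (√(2 * Real.pi))⁻¹ * Real.exp (-(1 / 2 - c) * x ^ 2) := by
    intro x
    simp only [gaussianPDFReal, smul_eq_mul, NNReal.coe_one, mul_one, sub_zero]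
    rw [mul_assoc, ← Real.exp_add]
    congr 2
    ring
  simp_rw [this]
  have hpos : 0 < 1 - 2 * c := by linarith
  rw [integral_const_mul, integral_gaussian, ← Real.sqrt_inv, ← Real.sqrt_inv,
    ← Real.sqrt_mul (by positivity)]
  congr 1
  have : 1 / 2 - c ≠ 0 := by linarith
  have := Real.pi_ne_zero
  field_simp

lemma exp_neg_mul_inv_sqrt_le {s : ℝ} (hs : |s| * 4 ≤ 1) :
    Real.exp (-s) * (√(1 - 2 * s))⁻¹ ≤ Real.exp (4 * s ^ 2) := by
  have hs' : |2 * s| ≤ 1 / 2 := by rw [abs_mul, abs_two]; linarith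
  have h1 := Real.abs_log_sub_add_sum_range_le (x := 2 * s) (by linarith) 1
  have hpos : 0 < 1 - 2 * s := by have := (abs_le.1 hs').2; linarith
  have h2 : |2 * s| ^ (1 + 1) / (1 - |2 * s|) ≤ 8 * s ^ 2 := by
    rw [div_le_iff₀ (by linarith), show |2 * s| ^ (1 + 1) = 4 * s ^ 2 by rw [sq_abs]; ring]
    nlinarith [sq_nonneg s]
  have h3 := (abs_le.1 (h1.trans h2)).1
  simp only [Finset.sum_range_one, zero_add, pow_one, Nat.cast_zero, div_one] at h3
  rw [← Real.sqrt_inv, ← Real.exp_log (inv_pos.2 hpos), Real.log_inv, ← Real.exp_half,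
    ← Real.exp_add]
  apply Real.exp_le_exp.2
  linarith

lemma subExpOn_sq_sub_one :
    SubExpOn (gaussianReal 0 1) Set.univ (fun x : ℝ => x ^ 2 - 1) 0 0 4 4 := by
  intro s hs
  have hs2 : s < 1 / 2 := by have := le_abs_self s; linarith
  have : ∀ x : ℝ, Real.exp (s * (x ^ 2 - 1)) = Real.exp (-s) * Real.exp (s * x ^ 2) := by
    intro x
    rw [← Real.exp_add]
    congr 1
    ring
  simp only [Set.indicator_univ, this]
  refine ⟨(integrable_exp_mul_sq_gaussianReal hs2).const_mul _, ?_⟩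
  rw [integral_const_mul, integral_exp_mul_sq_gaussianReal hs2]
  refine (exp_neg_mul_inv_sqrt_le hs).trans (le_of_eq ?_)
  congr 1
  ring

lemma subExpOn_id : SubExpOn (gaussianReal 0 1) Set.univ (fun x : ℝ => x) 0 0 (1 / 2) 0 := by
  intro s _
  simp only [Set.indicator_univ]
  refine ⟨integrable_exp_mul_gaussianReal s, le_of_eq ?_⟩
  have := congrFun (mgf_fun_id_gaussianReal (μ := 0) (v := 1)) s
  rw [mgf] at this
  rw [this]
  congr 1
  simp
  ring

lemma integrable_pow_gaussianReal (k : ℕ) :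
    Integrable (fun x : ℝ => x ^ k) (gaussianReal 0 1) :=
  integrable_pow_of_mem_interior_integrableExpSet (X := id) (by
    rw [integrableExpSet_id_gaussianReal, interior_univ]; trivial) k

lemma integral_pow_gaussianReal (k : ℕ) :
    ∫ x, x ^ k ∂gaussianReal 0 1 = iteratedDeriv k (fun t : ℝ => Real.exp (t ^ 2 / 2)) 0 := by
  have h := iteratedDeriv_mgf_zero (X := id) (μ := gaussianReal 0 1) (by
    rw [integrableExpSet_id_gaussianReal, interior_univ]; trivial) k
  rw [mgf_id_gaussianReal] at h
  simpa using h.symm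

lemma iteratedDeriv_exp_sq_half :
    (iteratedDeriv 2 (fun t : ℝ => Real.exp (t ^ 2 / 2)) =
      fun t => (t ^ 2 + 1) * Real.exp (t ^ 2 / 2)) ∧
    iteratedDeriv 3 (fun t : ℝ => Real.exp (t ^ 2 / 2)) =
      fun t => (t ^ 3 + 3 * t) * Real.exp (t ^ 2 / 2) := by
  have hE : ∀ t : ℝ, HasDerivAt (fun t : ℝ => Real.exp (t ^ 2 / 2))
      (Real.exp (t ^ 2 / 2) * t) t := by
    intro t
    have := (((hasDerivAt_id t).pow 2).div_const 2).exp
    convert! this using 1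
    simp
  have h1 : iteratedDeriv 1 (fun t : ℝ => Real.exp (t ^ 2 / 2)) =
      fun t => t * Real.exp (t ^ 2 / 2) := by
    funext t
    rw [iteratedDeriv_one, (hE t).deriv, mul_comm]
  have h2 : iteratedDeriv 2 (fun t : ℝ => Real.exp (t ^ 2 / 2)) =
      fun t => (t ^ 2 + 1) * Real.exp (t ^ 2 / 2) := by
    funext t
    rw [iteratedDeriv_succ, h1, ((hasDerivAt_id' t).fun_mul (hE t)).deriv]
    ring
  refine ⟨h2, ?_⟩
  funext t
  rw [iteratedDeriv_succ, h2,
    (((hasDerivAt_pow 2 t).add_const 1).fun_mul (hE t)).deriv]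
  push_cast
  ring

lemma integral_sq_gaussianReal : ∫ x, x ^ 2 ∂gaussianReal 0 1 = (1 : ℝ) := by
  rw [integral_pow_gaussianReal, iteratedDeriv_exp_sq_half.1]
  simp

lemma integral_cube_gaussianReal : ∫ x, x ^ 3 ∂gaussianReal 0 1 = (0 : ℝ) := by
  rw [integral_pow_gaussianReal, iteratedDeriv_exp_sq_half.2]
  simp

lemma integral_fourth_gaussianReal : ∫ x, x ^ 4 ∂gaussianReal 0 1 = (3 : ℝ) := by
  rw [integral_pow_gaussianReal, iteratedDeriv_succ, iteratedDeriv_exp_sq_half.2]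
  have h : HasDerivAt (fun t : ℝ => (t ^ 3 + 3 * t) * Real.exp (t ^ 2 / 2)) 3 0 := by
    have h1 := ((hasDerivAt_pow 3 (0 : ℝ)).add ((hasDerivAt_id (0 : ℝ)).const_mul 3)).mul
      (((hasDerivAt_id (0 : ℝ)).pow 2).div_const 2).exp
    convert! h1 using 1
    simp
  exact h.deriv

lemma exp_le_one_add_add_sq_mul_exp_abs (x : ℝ) :
    Real.exp x ≤ 1 + x + x ^ 2 * Real.exp |x| := by
  have h := Complex.norm_exp_sub_sum_le_norm_mul_exp (x : ℂ) 2
  have h2 : Complex.exp x - ∑ m ∈ Finset.range 2, (x : ℂ) ^ m / (m.factorial : ℂ) =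
      ((Real.exp x - (1 + x) : ℝ) : ℂ) := by
    simp [Finset.sum_range_succ]
  rw [h2, Complex.norm_real, Complex.norm_real, Real.norm_eq_abs, Real.norm_eq_abs, sq_abs] at h
  linarith [(abs_le.1 h).2]

lemma subExpOn_sum_sq_sub_one (d : ℕ) :
    SubExpOn (gaussVec d 1) Set.univ (fun x => ∑ j, (x j ^ 2 - 1)) 0 0 (4 * d) 4 := by
  intro s hs
  simp only [Set.indicator_univ, Finset.mul_sum, Real.exp_sum]
  have h := subExpOn_sq_sub_one s hs
  simp only [Set.indicator_univ] at h
  unfold gaussVec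
  refine ⟨Integrable.fintype_prod (f := fun _ y => Real.exp (s * (y ^ 2 - 1))) fun _ => h.1, ?_⟩
  rw [integral_fintype_prod_eq_prod (fun _ y => Real.exp (s * (y ^ 2 - 1)))]
  calc _ ≤ ∏ _i : Fin d, Real.exp (s * 0 + |s| * 0 + s ^ 2 * 4) :=
        Finset.prod_le_prod (fun i _ => integral_nonneg fun x => (Real.exp_pos _).le)
          fun i _ => h.2
    _ = _ := by
        rw [Finset.prod_const, Finset.card_univ, Fintype.card_fin, ← Real.exp_nat_mul]
        congr 1
        ring

lemma pow_four_le_exp_add_exp_neg (y : ℝ) : y ^ 4 ≤ 24 * (Real.exp y + Real.exp (-y)) := by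
  have h := Real.pow_div_factorial_le_exp |y| (abs_nonneg y) 4
  rw [show |y| ^ 4 = y ^ 4 from (by decide : Even 4).pow_abs y,
    show ((Nat.factorial 4 : ℕ) : ℝ) = 24 by norm_num [Nat.factorial]] at h
  have h2 : Real.exp |y| ≤ Real.exp y + Real.exp (-y) := by
    rcases abs_choice y with h | h <;> rw [h] <;> linarith [Real.exp_pos y, Real.exp_pos (-y)]
  linarith

lemma sum_sq_sub_one_fourth_moment {d : ℕ} (hd : 1 ≤ d) :
    Integrable (fun x : Fin d → ℝ => (∑ j, (x j ^ 2 - 1)) ^ 4) (gaussVec d 1) ∧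
      ∫ x, (∑ j, (x j ^ 2 - 1)) ^ 4 ∂gaussVec d 1 ≤ 18432 * (d : ℝ) ^ 2 := by
  have hd' : (1 : ℝ) ≤ d := by exact_mod_cast hd
  have hsd : 1 ≤ √(d : ℝ) := Real.one_le_sqrt.2 hd'
  set l : ℝ := 1 / (4 * √d) with hl
  have hl0 : 0 < l := by positivity
  have hl2 : l ^ 2 * (16 * d) = 1 := by
    rw [hl, div_pow, mul_pow, Real.sq_sqrt (by positivity)]
    field_simp
    norm_num
  have hl1 : |l| * 4 ≤ 1 := by
    rw [abs_of_pos hl0]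
    nlinarith
  have h1 := subExpOn_sum_sq_sub_one d l hl1
  have h2 := subExpOn_sum_sq_sub_one d (-l) (by rwa [abs_neg])
  simp only [Set.indicator_univ, abs_neg, neg_sq, neg_mul, mul_zero, add_zero,
    zero_add] at h1 h2
  have hle : ∀ x : Fin d → ℝ, (∑ j, (x j ^ 2 - 1)) ^ 4 ≤ 24 * (16 * d) ^ 2 *
      (Real.exp (l * ∑ j, (x j ^ 2 - 1)) + Real.exp (-(l * ∑ j, (x j ^ 2 - 1)))) := by
    intro x
    have := pow_four_le_exp_add_exp_neg (l * ∑ j, (x j ^ 2 - 1))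
    have h16 : (0 : ℝ) ≤ (16 * d) ^ 2 := by positivity
    calc (∑ j, (x j ^ 2 - 1)) ^ 4
        = (l ^ 2 * (16 * d)) ^ 2 * (∑ j, (x j ^ 2 - 1)) ^ 4 := by rw [hl2]; ring
      _ = (16 * d) ^ 2 * (l * ∑ j, (x j ^ 2 - 1)) ^ 4 := by ring
      _ ≤ _ := by nlinarith
  have hi := (h1.1.add h2.1).const_mul (24 * (16 * d : ℝ) ^ 2)
  have hm : Measurable fun x : Fin d → ℝ => (∑ j, (x j ^ 2 - 1)) ^ 4 := by fun_prop
  have hint : Integrable (fun x : Fin d → ℝ => (∑ j, (x j ^ 2 - 1)) ^ 4) (gaussVec d 1) := by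
    refine hi.mono' hm.aestronglyMeasurable (Filter.Eventually.of_forall fun x => ?_)
    rw [Real.norm_of_nonneg (by positivity)]
    exact hle x
  refine ⟨hint, (integral_mono hint hi hle).trans ?_⟩
  rw [integral_const_mul]
  simp only [Pi.add_apply]
  rw [integral_add h1.1 h2.1]
  have he : Real.exp (l ^ 2 * (4 * d)) ≤ 3 / 2 := by
    rw [show l ^ 2 * (4 * d) = 1 / 4 by linarith]
    have := Real.exp_bound_div_one_sub_of_interval' (x := 1 / 4) (by norm_num) (by norm_num)
    linarith
  nlinarith [h1.2, h2.2, sq_nonneg (d : ℝ)]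

lemma sum_sq_sub_one_tail (d : ℕ) {L : ℝ} (hL : 0 < L) :
    gaussVec d 1 {x | 8 * (√(d * L) + L) < |∑ j, (x j ^ 2 - 1)|} ≤
      2 * ENNReal.ofReal (Real.exp (-(2 * L))) := by
  have h := subExpOn_sq_sub_one.tail (by norm_num) (by norm_num) (ι := Fin d) (fun _ => 1)
    (W := 1) (K := 2 * L) (by linarith) zero_le_one (by simp)
  refine (measure_mono ?_).trans h
  intro x hx
  simp only [Set.mem_ofPred_eq] at hx
  refine ⟨fun i => Set.mem_univ _, ?_⟩
  simp only [Set.mem_ofPred_eq, zero_mul, one_mul, sub_zero, zero_add]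
  refine lt_of_le_of_lt ?_ hx
  have : √(2 * L * (4 * ∑ _i : Fin d, (1 : ℝ) ^ 2)) ≤ 4 * √(d * L) := by
    rw [show (4 : ℝ) = √16 by rw [show (16 : ℝ) = 4 ^ 2 by norm_num]; simp,
      ← Real.sqrt_mul (by norm_num)]
    apply Real.sqrt_le_sqrt
    simp
    have : 0 ≤ (d : ℝ) * L := by positivity
    have h4 : √(16 : ℝ) = 4 := by rw [show (16 : ℝ) = 4 ^ 2 by norm_num]; simp
    nlinarith
  linarith

lemma gaussVec_map_eval {d : ℕ} (i : Fin d) :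
    MeasurePreserving (fun x : Fin d → ℝ => x i) (gaussVec d 1) (gaussianReal 0 1) :=
  measurePreserving_eval (fun _ : Fin d => gaussianReal 0 1) i

lemma SubExpOn.of_measurePreserving {α β : Type*} [MeasurableSpace α] [MeasurableSpace β]
    {μ : Measure α} {γ : Measure β} {Ψ : α → β} (hΨ : MeasurePreserving Ψ μ γ) {G : Set β}
    {f : β → ℝ} {m e V R : ℝ} (hG : MeasurableSet G) (hf : Measurable f)
    (H : SubExpOn μ (Ψ ⁻¹' G) (f ∘ Ψ) m e V R) : SubExpOn γ G f m e V R := by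
  intro s hs
  have hm : Measurable (G.indicator fun x => Real.exp (s * f x)) :=
    (by fun_prop : Measurable fun x => Real.exp (s * f x)).indicator hG
  have heq : (G.indicator fun x => Real.exp (s * f x)) ∘ Ψ =
      (Ψ ⁻¹' G).indicator fun x => Real.exp (s * (f ∘ Ψ) x) := by
    funext x
    by_cases hx : Ψ x ∈ G <;> simp [Set.indicator, hx]
  have h := H s hs
  rw [← heq] at h
  refine ⟨(hΨ.integrable_comp hm.aestronglyMeasurable).1 h.1, ?_⟩
  rw [← hΨ.map_eq, integral_map hΨ.measurable.aemeasurable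
    hm.aestronglyMeasurable]
  exact h.2

lemma SubExpOn.comp_measurePreserving {α β : Type*} [MeasurableSpace α] [MeasurableSpace β]
    {μ : Measure α} {γ : Measure β} {Ψ : α → β} (hΨ : MeasurePreserving Ψ μ γ)
    {f : β → ℝ} {m e V R : ℝ} (hf : Measurable f)
    (H : SubExpOn γ Set.univ f m e V R) : SubExpOn μ Set.univ (f ∘ Ψ) m e V R := by
  intro s hs
  have hm : Measurable (fun x => Real.exp (s * f x)) := by fun_prop
  have h := H s hs
  simp only [Set.indicator_univ] at h ⊢
  refine ⟨(hΨ.integrable_comp hm.aestronglyMeasurable).2 h.1, ?_⟩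
  rw [← hΨ.map_eq, integral_map hΨ.measurable.aemeasurable
    hm.aestronglyMeasurable] at h
  exact h.2

/-- Rotation invariance: any unit direction can be turned into a coordinate direction. -/
lemma exists_measurePreserving_rotation {d : ℕ} (u : Fin d → ℝ) (hu : ∑ j, u j ^ 2 = 1) :
    ∃ (i : Fin d) (Ψ : (Fin d → ℝ) → Fin d → ℝ),
      MeasurePreserving Ψ (gaussVec d 1) (gaussVec d 1) ∧
      (∀ x, ∑ j, Ψ x j ^ 2 = ∑ j, x j ^ 2) ∧ ∀ x, ∑ j, u j * Ψ x j = x i := by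
  have hd : 0 < d := by
    rcases Nat.eq_zero_or_pos d with rfl | h
    · simp at hu
    · exact h
  let i : Fin d := ⟨0, hd⟩
  set e : EuclideanSpace ℝ (Fin d) := WithLp.toLp 2 u with he
  have hnorm : ‖e‖ = 1 := by
    rw [EuclideanSpace.norm_eq]
    simp [he, hu]
  obtain ⟨b, hb⟩ := Orthonormal.exists_orthonormalBasis_extension_of_card_eq
    (𝕜 := ℝ) (E := EuclideanSpace ℝ (Fin d)) (ι := Fin d) (by simp) (v := fun _ => e)
    (s := {i}) (by
      rw [orthonormal_iff_ite]
      rintro ⟨a, ha⟩ ⟨c, hc⟩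
      have : a = c := by rw [Set.mem_singleton_iff.1 ha, Set.mem_singleton_iff.1 hc]
      subst this
      simp [Set.domRestrict, hnorm])
  have hbi : b i = e := hb i rfl
  refine ⟨i, fun x => WithLp.ofLp (∑ j, x j • b j), ⟨?_, ?_⟩, fun x => ?_, fun x => ?_⟩
  · fun_prop
  · have h1 := stdGaussian_eq_map_pi_orthonormalBasis b
    rw [← map_pi_eq_stdGaussian] at h1
    have h2 : (fun x : Fin d → ℝ => WithLp.ofLp (∑ j, x j • b j)) =
      WithLp.ofLp ∘ fun x => ∑ j, x j • b j := rfl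
    unfold gaussVec
    rw [h2, ← Measure.map_map (by fun_prop) (by fun_prop), ← h1,
      Measure.map_map (by fun_prop) (by fun_prop)]
    exact Measure.map_id
  · have h1 : ‖∑ j, x j • b j‖ ^ 2 = ∑ j, x j ^ 2 := by
      rw [← b.repr.norm_map, EuclideanSpace.norm_sq_eq]
      refine Finset.sum_congr rfl fun k _ => ?_
      simp [Pi.single_apply]
    rw [← h1, EuclideanSpace.norm_sq_eq]
    simp
  · have h1 : inner ℝ (b i) (∑ j, x j • b j) = x i := by
      simp [inner_sum, inner_smul_right, orthonormal_iff_ite.1 b.orthonormal]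
    rw [hbi, PiLp.inner_apply] at h1
    rw [← h1]
    refine Finset.sum_congr rfl fun k _ => ?_
    simp [he, mul_comm]

lemma integral_sum_sq_sub_one_mul {d : ℕ} (i : Fin d) {φ : ℝ → ℝ} (hφm : Measurable φ)
    (hφ : Integrable φ (gaussianReal 0 1))
    (hφ2 : Integrable (fun x => (x ^ 2 - 1) * φ x) (gaussianReal 0 1)) :
    Integrable (fun x : Fin d → ℝ => (∑ j, (x j ^ 2 - 1)) * φ (x i)) (gaussVec d 1) ∧
      ∫ x, (∑ j, (x j ^ 2 - 1)) * φ (x i) ∂gaussVec d 1 =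
        ∫ x, (x ^ 2 - 1) * φ x ∂gaussianReal 0 1 := by
  have hind : iIndepFun (fun (j : Fin d) (x : Fin d → ℝ) => x j) (gaussVec d 1) :=
    iIndepFun_pi (X := fun _ => id) fun _ => aemeasurable_id
  have hsq : Integrable (fun x : ℝ => x ^ 2 - 1) (gaussianReal 0 1) :=
    (integrable_pow_gaussianReal 2).sub (integrable_const 1)
  have hsq0 : ∫ x : ℝ, (x ^ 2 - 1) ∂gaussianReal 0 1 = 0 := by
    rw [integral_sub (integrable_pow_gaussianReal 2) (integrable_const 1),
      integral_sq_gaussianReal]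
    simp
  have hi : Integrable (fun x : Fin d → ℝ => φ (x i)) (gaussVec d 1) :=
    ((gaussVec_map_eval i).integrable_comp hφ.aestronglyMeasurable).2 hφ
  have hterm : ∀ j : Fin d, Integrable (fun x : Fin d → ℝ => (x j ^ 2 - 1) * φ (x i))
      (gaussVec d 1) ∧ ∫ x, (x j ^ 2 - 1) * φ (x i) ∂gaussVec d 1 =
        if j = i then ∫ x, (x ^ 2 - 1) * φ x ∂gaussianReal 0 1 else 0 := by
    intro j
    by_cases hji : j = i
    · subst hji
      rw [if_pos rfl]
      refine ⟨((gaussVec_map_eval j).integrable_comp hφ2.aestronglyMeasurable).2 hφ2, ?_⟩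
      rw [← (gaussVec_map_eval j).map_eq, integral_map
        (gaussVec_map_eval j).measurable.aemeasurable
        (by rw [(gaussVec_map_eval j).map_eq]; exact hφ2.aestronglyMeasurable)]
    · rw [if_neg hji]
      have hI : IndepFun (fun x : Fin d → ℝ => x j ^ 2 - 1) (fun x => φ (x i)) (gaussVec d 1) :=
        (hind.indepFun hji).comp (φ := fun y => y ^ 2 - 1) (ψ := φ) (by fun_prop) hφm
      have hj : Integrable (fun x : Fin d → ℝ => x j ^ 2 - 1) (gaussVec d 1) :=
        ((gaussVec_map_eval j).integrable_comp hsq.aestronglyMeasurable).2 hsq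
      refine ⟨hI.integrable_mul hj hi, ?_⟩
      rw [hI.integral_fun_mul_eq_mul_integral hj.aestronglyMeasurable hi.aestronglyMeasurable]
      have : ∫ x, (x j ^ 2 - 1) ∂gaussVec d 1 = 0 := by
        rw [← hsq0, ← (gaussVec_map_eval j).map_eq, integral_map
        (gaussVec_map_eval j).measurable.aemeasurable
          (by rw [(gaussVec_map_eval j).map_eq]; exact hsq.aestronglyMeasurable)]
      rw [this, zero_mul]
  simp only [Finset.sum_mul]
  refine ⟨integrable_finsetSum _ fun j _ => (hterm j).1, ?_⟩
  rw [integral_finsetSum _ fun j _ => (hterm j).1]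
  simp [hterm]

lemma integral_sum_sq_sub_one_mul_id {d : ℕ} (i : Fin d) :
    Integrable (fun x : Fin d → ℝ => (∑ j, (x j ^ 2 - 1)) * x i) (gaussVec d 1) ∧
      ∫ x, (∑ j, (x j ^ 2 - 1)) * x i ∂gaussVec d 1 = 0 := by
  have h1 : Integrable (fun x : ℝ => x) (gaussianReal 0 1) := by
    simpa using integrable_pow_gaussianReal 1
  have he : (fun x : ℝ => (x ^ 2 - 1) * x) = fun x => x ^ 3 - x := by funext x; ring
  have h := integral_sum_sq_sub_one_mul i (φ := fun x => x) measurable_id h1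
    (by rw [he]; exact (integrable_pow_gaussianReal 3).sub h1)
  rw [he, integral_sub (integrable_pow_gaussianReal 3) h1, integral_cube_gaussianReal,
    integral_id_gaussianReal] at h
  simpa using h

lemma integral_sum_sq_sub_one_mul_sq {d : ℕ} (i : Fin d) :
    Integrable (fun x : Fin d → ℝ => (∑ j, (x j ^ 2 - 1)) * x i ^ 2) (gaussVec d 1) ∧
      ∫ x, (∑ j, (x j ^ 2 - 1)) * x i ^ 2 ∂gaussVec d 1 = 2 := by
  have h1 := integrable_pow_gaussianReal 2
  have he : (fun x : ℝ => (x ^ 2 - 1) * x ^ 2) = fun x => x ^ 4 - x ^ 2 := by funext x; ring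
  have h := integral_sum_sq_sub_one_mul i (φ := fun x => x ^ 2) (by fun_prop) h1
    (by rw [he]; exact (integrable_pow_gaussianReal 4).sub h1)
  rw [he, integral_sub (integrable_pow_gaussianReal 4) h1, integral_fourth_gaussianReal,
    integral_sq_gaussianReal] at h
  rwa [show (3 : ℝ) - 1 = 2 by norm_num] at h

lemma integral_sq_mul_exp_bound {d : ℕ} (i : Fin d) :
    Integrable (fun x : Fin d → ℝ => (∑ j, (x j ^ 2 - 1)) ^ 2 * Real.exp (x i ^ 2 / 8))
      (gaussVec d 1) ∧
    ∫ x, (∑ j, (x j ^ 2 - 1)) ^ 2 * Real.exp (x i ^ 2 / 8) ∂gaussVec d 1 ≤ 10000 * (d : ℝ) := by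
  have hd : 1 ≤ d := i.pos
  have hd' : (1 : ℝ) ≤ d := by exact_mod_cast hd
  obtain ⟨h4, h4'⟩ := sum_sq_sub_one_fourth_moment hd
  have hE : Integrable (fun x : ℝ => Real.exp (1 / 4 * x ^ 2)) (gaussianReal 0 1) :=
    integrable_exp_mul_sq_gaussianReal (by norm_num)
  have hE' : ∫ x : ℝ, Real.exp (1 / 4 * x ^ 2) ∂gaussianReal 0 1 ≤ 2 := by
    rw [integral_exp_mul_sq_gaussianReal (by norm_num), inv_le_comm₀ (by positivity) (by norm_num)]
    apply Real.le_sqrt_of_sq_le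
    norm_num
  have hEi : Integrable (fun x : Fin d → ℝ => Real.exp (1 / 4 * x i ^ 2)) (gaussVec d 1) :=
    ((gaussVec_map_eval i).integrable_comp hE.aestronglyMeasurable).2 hE
  have hEi' : ∫ x : Fin d → ℝ, Real.exp (1 / 4 * x i ^ 2) ∂gaussVec d 1 ≤ 2 := by
    rw [← (gaussVec_map_eval i).map_eq, integral_map
        (gaussVec_map_eval i).measurable.aemeasurable
      (by rw [(gaussVec_map_eval i).map_eq]; exact hE.aestronglyMeasurable)] at hE'
    exact hE'
  have hle : ∀ x : Fin d → ℝ, (∑ j, (x j ^ 2 - 1)) ^ 2 * Real.exp (x i ^ 2 / 8) ≤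
      (2 * d : ℝ)⁻¹ * (∑ j, (x j ^ 2 - 1)) ^ 4 + d / 2 * Real.exp (1 / 4 * x i ^ 2) := by
    intro x
    set A := (∑ j, (x j ^ 2 - 1)) ^ 2 with hA
    set B := Real.exp (x i ^ 2 / 8) with hB
    have h1 : (∑ j, (x j ^ 2 - 1)) ^ 4 = A ^ 2 := by ring
    have h2 : Real.exp (1 / 4 * x i ^ 2) = B ^ 2 := by
      rw [hB, ← Real.exp_nat_mul]
      congr 1
      push_cast
      ring
    rw [h1, h2, inv_mul_eq_div, div_add' _ _ _ (by positivity), le_div_iff₀ (by positivity)]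
    nlinarith [sq_nonneg (A - d * B)]
  have hi := (h4.const_mul (2 * d : ℝ)⁻¹).add (hEi.const_mul (d / 2 : ℝ))
  have hm : Measurable (fun x : Fin d → ℝ => (∑ j, (x j ^ 2 - 1)) ^ 2 *
    Real.exp (x i ^ 2 / 8)) := by fun_prop
  have hint : Integrable (fun x : Fin d → ℝ => (∑ j, (x j ^ 2 - 1)) ^ 2 *
      Real.exp (x i ^ 2 / 8)) (gaussVec d 1) := by
    refine hi.mono' hm.aestronglyMeasurable (Filter.Eventually.of_forall fun x => ?_)
    rw [Real.norm_of_nonneg (by positivity)]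
    exact hle x
  refine ⟨hint, (integral_mono hint hi hle).trans ?_⟩
  simp only [Pi.add_apply]
  rw [integral_add (h4.const_mul _) (hEi.const_mul _), integral_const_mul, integral_const_mul]
  have h5 : (2 * d : ℝ)⁻¹ * ∫ x, (∑ j, (x j ^ 2 - 1)) ^ 4 ∂gaussVec d 1 ≤ 9216 * d := by
    rw [inv_mul_eq_div, div_le_iff₀ (by positivity)]
    linarith
  have h6 : (d / 2 : ℝ) * ∫ x : Fin d → ℝ, Real.exp (1 / 4 * x i ^ 2) ∂gaussVec d 1 ≤
    d / 2 * 2 := by gcongr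
  linarith

/-- On the event that `∑ (x_j² - 1)` is bounded by `T`, its product with a function of a single
coordinate of at most quadratic growth is sub-exponential. -/
lemma subExpOn_sum_sq_sub_one_mul {d : ℕ} (i : Fin d) {φ : ℝ → ℝ} (hφm : Measurable φ)
    (hφ : ∀ x, φ x ^ 2 * Real.exp (|φ x| / 16) ≤ 4096 * Real.exp (x ^ 2 / 8)) {m T M : ℝ}
    (hM : 0 < M)
    (hint : Integrable (fun x : Fin d → ℝ => (∑ j, (x j ^ 2 - 1)) * φ (x i)) (gaussVec d 1))
    (hm : ∫ x, (∑ j, (x j ^ 2 - 1)) * φ (x i) ∂gaussVec d 1 = m) :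
    SubExpOn (gaussVec d 1) {x | |∑ j, (x j ^ 2 - 1)| ≤ T}
      (fun x => (∑ j, (x j ^ 2 - 1)) * φ (x i)) m
      (40960000 * d / M + M * (gaussVec d 1).real {x | T < |∑ j, (x j ^ 2 - 1)|})
      (40960000 * d) (16 * T) := by
  intro s hs
  obtain ⟨hQ, hQ'⟩ := integral_sq_mul_exp_bound i
  set G : Set (Fin d → ℝ) := {x | |∑ j, (x j ^ 2 - 1)| ≤ T} with hG
  set Gc : Set (Fin d → ℝ) := {x | T < |∑ j, (x j ^ 2 - 1)|} with hGc
  have hGm : MeasurableSet G := measurableSet_le (by fun_prop) (by fun_prop)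
  have hGcm : MeasurableSet Gc := measurableSet_lt (by fun_prop) (by fun_prop)
  set X : (Fin d → ℝ) → ℝ := fun x => (∑ j, (x j ^ 2 - 1)) * φ (x i) with hX
  set Q : (Fin d → ℝ) → ℝ := fun x => (∑ j, (x j ^ 2 - 1)) ^ 2 * Real.exp (x i ^ 2 / 8) with hQd
  have hQnn : ∀ x, 0 ≤ Q x := fun x => by positivity
  have hXQ : ∀ x, X x ^ 2 ≤ 4096 * Q x := by
    intro x
    have h1 := hφ (x i)
    have h2 : (1 : ℝ) ≤ Real.exp (|φ (x i)| / 16) := Real.one_le_exp (by positivity)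
    have h3 : φ (x i) ^ 2 ≤ 4096 * Real.exp (x i ^ 2 / 8) := by nlinarith [sq_nonneg (φ (x i))]
    calc X x ^ 2 = (∑ j, (x j ^ 2 - 1)) ^ 2 * φ (x i) ^ 2 := by simp only [hX]; ring
      _ ≤ (∑ j, (x j ^ 2 - 1)) ^ 2 * (4096 * Real.exp (x i ^ 2 / 8)) := by gcongr
      _ = _ := by simp only [hQd]; ring
  have hpt : ∀ x, G.indicator (fun x => Real.exp (s * X x)) x ≤ 1 + s * X x +
      |s| * (4096 / M * Q x + M * Gc.indicator 1 x) + s ^ 2 * (4096 * Q x) := by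
    intro x
    have hnn : 0 ≤ 4096 / M * Q x := mul_nonneg (by positivity) (hQnn x)
    by_cases hx : x ∈ G
    · have hx' : x ∉ Gc := by
        simp only [hG, hGc, Set.mem_ofPred_eq] at hx ⊢
        exact not_lt.2 hx
      rw [Set.indicator_of_mem hx, Set.indicator_of_notMem hx']
      have h1 := exp_le_one_add_add_sq_mul_exp_abs (s * X x)
      have h2 : |s * X x| ≤ |φ (x i)| / 16 := by
        simp only [hG, Set.mem_ofPred_eq] at hx
        rw [abs_mul, hX, abs_mul]
        have : |s| * |∑ j, (x j ^ 2 - 1)| ≤ |s| * T := by gcongr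
        nlinarith [abs_nonneg (φ (x i))]
      have h3 : X x ^ 2 * Real.exp |s * X x| ≤ 4096 * Q x := by
        calc X x ^ 2 * Real.exp |s * X x| ≤ X x ^ 2 * Real.exp (|φ (x i)| / 16) := by gcongr
          _ = (∑ j, (x j ^ 2 - 1)) ^ 2 * (φ (x i) ^ 2 * Real.exp (|φ (x i)| / 16)) := by
            simp only [hX]; ring
          _ ≤ (∑ j, (x j ^ 2 - 1)) ^ 2 * (4096 * Real.exp (x i ^ 2 / 8)) :=
            mul_le_mul_of_nonneg_left (hφ _) (sq_nonneg _)
          _ = _ := by simp only [hQd]; ring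
      have h4 : (s * X x) ^ 2 * Real.exp |s * X x| ≤ s ^ 2 * (4096 * Q x) := by
        rw [mul_pow, mul_assoc]
        gcongr
      have h5 : 0 ≤ |s| * (4096 / M * Q x + M * 0) := by
        rw [mul_zero, add_zero]; positivity
      linarith
    · have hx' : x ∈ Gc := by
        simp only [hG, hGc, Set.mem_ofPred_eq] at hx ⊢
        exact not_le.1 hx
      rw [Set.indicator_of_notMem hx, Set.indicator_of_mem hx', Pi.one_apply]
      have h1 : |X x| ≤ 4096 / M * Q x + M * 1 := by
        have := hXQ x
        rw [div_mul_eq_mul_div, div_add' _ _ _ hM.ne', le_div_iff₀ hM]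
        nlinarith [sq_nonneg (|X x| - M), sq_abs (X x), sq_nonneg M]
      have h2 : -(s * X x) ≤ |s| * |X x| := by
        rw [← abs_mul]; exact neg_le_abs _
      have h3 : |s| * |X x| ≤ |s| * (4096 / M * Q x + M * 1) := by gcongr
      have h4 : 0 ≤ s ^ 2 * (4096 * Q x) := by have := hQnn x; positivity
      linarith
  have hind : Integrable (Gc.indicator (1 : (Fin d → ℝ) → ℝ)) (gaussVec d 1) :=
    (integrable_const (1 : ℝ)).indicator hGcm
  have i1 : Integrable (fun x => 1 + s * X x) (gaussVec d 1) :=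
    (integrable_const 1).add (hint.const_mul s)
  have i2 : Integrable (fun x => 4096 / M * Q x + M * Gc.indicator 1 x) (gaussVec d 1) :=
    (hQ.const_mul _).add (hind.const_mul _)
  have i12 : Integrable (fun x => 1 + s * X x + |s| * (4096 / M * Q x + M * Gc.indicator 1 x))
    (gaussVec d 1) := i1.add (i2.const_mul |s|)
  have i3 : Integrable (fun x => s ^ 2 * (4096 * Q x)) (gaussVec d 1) :=
    (hQ.const_mul _).const_mul _
  have hi := i12.add i3
  have hmeas : Measurable (G.indicator fun x => Real.exp (s * X x)) :=
    (by fun_prop : Measurable fun x => Real.exp (s * X x)).indicator hGm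
  have hi' : Integrable (G.indicator fun x => Real.exp (s * X x)) (gaussVec d 1) := by
    refine hi.mono' hmeas.aestronglyMeasurable (Filter.Eventually.of_forall fun x => ?_)
    rw [Real.norm_of_nonneg (Set.indicator_nonneg (fun _ _ => (Real.exp_pos _).le) x)]
    exact hpt x
  refine ⟨hi', (integral_mono hi' hi hpt).trans ?_⟩
  simp only [Pi.add_apply]
  rw [integral_add i12 i3, integral_add i1 (i2.const_mul |s|),
    integral_add (integrable_const 1) (hint.const_mul s), integral_const_mul, integral_const_mul,
    integral_const_mul, integral_const_mul, integral_add (hQ.const_mul _) (hind.const_mul _),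
    integral_const_mul, integral_const_mul, integral_indicator_one hGcm, hm]
  refine le_trans ?_ (Real.add_one_le_exp _)
  have hq1 : 4096 / M * ∫ x, Q x ∂gaussVec d 1 ≤ 40960000 * d / M := by
    rw [div_mul_eq_mul_div]
    exact div_le_div_of_nonneg_right (by linarith) hM.le
  have hq2 : |s| * (4096 / M * ∫ x, Q x ∂gaussVec d 1 + M * (gaussVec d 1).real Gc) ≤
    |s| * (40960000 * d / M + M * (gaussVec d 1).real Gc) := by gcongr
  have hq3 : s ^ 2 * (4096 * ∫ x, Q x ∂gaussVec d 1) ≤ s ^ 2 * (40960000 * d) := by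
    have : 4096 * ∫ x, Q x ∂gaussVec d 1 ≤ 40960000 * d := by linarith
    gcongr
  simp only [integral_const, probReal_univ, smul_eq_mul, one_mul]
  linarith

lemma sq_mul_exp_abs_le (x : ℝ) :
    x ^ 2 * Real.exp (|x| / 16) ≤ 4096 * Real.exp (x ^ 2 / 8) := by
  have h1 : x ^ 2 ≤ 16 * Real.exp (x ^ 2 / 16) := by
    have := Real.add_one_le_exp (x ^ 2 / 16)
    linarith
  have h2 : |x| / 16 ≤ x ^ 2 / 16 + 1 := by
    nlinarith [sq_nonneg (|x| - 1), sq_abs x]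
  have h3 : Real.exp 1 ≤ 3 := by linarith [Real.exp_one_lt_d9]
  have h4 := Real.exp_pos (x ^ 2 / 16)
  calc x ^ 2 * Real.exp (|x| / 16)
      ≤ (16 * Real.exp (x ^ 2 / 16)) * Real.exp (x ^ 2 / 16 + 1) := by gcongr
    _ = 16 * Real.exp 1 * (Real.exp (x ^ 2 / 16) * Real.exp (x ^ 2 / 16)) := by
      rw [Real.exp_add]; ring
    _ = 16 * Real.exp 1 * Real.exp (x ^ 2 / 8) := by
      rw [← Real.exp_add]; ring_nf
    _ ≤ _ := by gcongr; linarith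

lemma sq_sq_mul_exp_abs_le (x : ℝ) :
    (x ^ 2) ^ 2 * Real.exp (|x ^ 2| / 16) ≤ 4096 * Real.exp (x ^ 2 / 8) := by
  have h1 := Real.quadratic_le_exp_of_nonneg (x := x ^ 2 / 16) (by positivity)
  have h2 : (x ^ 2) ^ 2 ≤ 4096 * Real.exp (x ^ 2 / 16) := by nlinarith [sq_nonneg x]
  rw [abs_of_nonneg (sq_nonneg x)]
  calc (x ^ 2) ^ 2 * Real.exp (x ^ 2 / 16)
      ≤ (4096 * Real.exp (x ^ 2 / 16)) * Real.exp (x ^ 2 / 16) := by gcongr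
    _ = _ := by rw [mul_assoc, ← Real.exp_add]; ring_nf

section UnitDirection

variable {d : ℕ} {u : Fin d → ℝ}

lemma subExpOn_inner (hu : ∑ j, u j ^ 2 = 1) :
    SubExpOn (gaussVec d 1) Set.univ (fun x => ∑ j, u j * x j) 0 0 (1 / 2) 0 := by
  obtain ⟨i, Ψ, hΨ, -, h2⟩ := exists_measurePreserving_rotation u hu
  refine SubExpOn.of_measurePreserving hΨ MeasurableSet.univ (by fun_prop) ?_
  have : ((fun x : Fin d → ℝ => ∑ j, u j * x j) ∘ Ψ) = (fun y : ℝ => y) ∘ fun x => x i :=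
    funext h2
  rw [this, Set.preimage_univ]
  exact subExpOn_id.comp_measurePreserving (gaussVec_map_eval i) (by fun_prop)

lemma subExpOn_inner_sq_sub_one (hu : ∑ j, u j ^ 2 = 1) :
    SubExpOn (gaussVec d 1) Set.univ (fun x => (∑ j, u j * x j) ^ 2 - 1) 0 0 4 4 := by
  obtain ⟨i, Ψ, hΨ, -, h2⟩ := exists_measurePreserving_rotation u hu
  refine SubExpOn.of_measurePreserving hΨ MeasurableSet.univ (by fun_prop) ?_
  have : ((fun x : Fin d → ℝ => (∑ j, u j * x j) ^ 2 - 1) ∘ Ψ) =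
      (fun y : ℝ => y ^ 2 - 1) ∘ fun x => x i := by
    funext x
    simp [h2 x]
  rw [this, Set.preimage_univ]
  exact subExpOn_sq_sub_one.comp_measurePreserving (gaussVec_map_eval i) (by fun_prop)

lemma subExpOn_mul_comp_inner (hu : ∑ j, u j ^ 2 = 1) {φ : ℝ → ℝ} (hφm : Measurable φ)
    (hφ : ∀ x, φ x ^ 2 * Real.exp (|φ x| / 16) ≤ 4096 * Real.exp (x ^ 2 / 8)) {m : ℝ} (T : ℝ)
    {M : ℝ} (hM : 0 < M)
    (hm : ∀ i, Integrable (fun x : Fin d → ℝ => (∑ j, (x j ^ 2 - 1)) * φ (x i)) (gaussVec d 1) ∧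
      ∫ x, (∑ j, (x j ^ 2 - 1)) * φ (x i) ∂gaussVec d 1 = m) :
    SubExpOn (gaussVec d 1) {x | |∑ j, (x j ^ 2 - 1)| ≤ T}
      (fun x => (∑ j, (x j ^ 2 - 1)) * φ (∑ j, u j * x j)) m
      (40960000 * d / M + M * (gaussVec d 1).real {x | T < |∑ j, (x j ^ 2 - 1)|})
      (40960000 * d) (16 * T) := by
  obtain ⟨i, Ψ, hΨ, h1, h2⟩ := exists_measurePreserving_rotation u hu
  have h3 : ∀ x, ∑ j, (Ψ x j ^ 2 - 1) = ∑ j, (x j ^ 2 - 1) := fun x => by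
    rw [Finset.sum_sub_distrib, Finset.sum_sub_distrib, h1]
  refine SubExpOn.of_measurePreserving hΨ (measurableSet_le (by fun_prop) (by fun_prop))
    (by fun_prop) ?_
  have hpre : Ψ ⁻¹' {x | |∑ j, (x j ^ 2 - 1)| ≤ T} = {x | |∑ j, (x j ^ 2 - 1)| ≤ T} := by
    ext x
    simp only [Set.mem_preimage, Set.mem_ofPred_eq, h3]
  have hcomp : ((fun x : Fin d → ℝ => (∑ j, (x j ^ 2 - 1)) * φ (∑ j, u j * x j)) ∘ Ψ) =
      fun x => (∑ j, (x j ^ 2 - 1)) * φ (x i) := by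
    funext x
    simp only [Function.comp_apply, h2, h3]
  rw [hpre, hcomp]
  exact subExpOn_sum_sq_sub_one_mul i hφm hφ hM (hm i).1 (hm i).2

end UnitDirection

/-- The unit sphere of `ℝ^d` has a `1/2`-net of cardinality at most `5^d`. -/
lemma exists_sphere_net (d : ℕ) : ∃ S : Finset (Fin d → ℝ), S.card ≤ 5 ^ d ∧
    (∀ u ∈ S, ∑ j, u j ^ 2 = 1) ∧
    ∀ x : Fin d → ℝ, ∑ j, x j ^ 2 = 1 → ∃ u ∈ S, ∑ j, (x j - u j) ^ 2 ≤ 1 / 4 := by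
  classical
  let P : Finset (EuclideanSpace ℝ (Fin d)) → Prop := fun s =>
    (∀ c ∈ s, ‖c‖ = 2) ∧ ∀ c ∈ s, ∀ e ∈ s, c ≠ e → 1 ≤ ‖c - e‖
  have hcard : ∀ s, P s → s.card ≤ 5 ^ d := fun s hs => by
    simpa using Besicovitch.card_le_of_separated s (fun c hc => (hs.1 c hc).le) hs.2
  obtain ⟨s, hs, hmax⟩ : ∃ s, P s ∧ ∀ t, P t → t.card ≤ s.card := by
    have hne : ∃ k, ∃ s, P s ∧ s.card = k := ⟨0, ∅, by simp [P], rfl⟩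
    have hb : ∀ k, (∃ s, P s ∧ s.card = k) → k ≤ 5 ^ d := by
      rintro k ⟨s, hs, rfl⟩
      exact hcard s hs
    obtain ⟨s, hs, hsk⟩ := Nat.sSup_mem (s := {k | ∃ s, P s ∧ s.card = k}) hne ⟨5 ^ d, hb⟩
    refine ⟨s, hs, fun t ht => ?_⟩
    rw [hsk]
    exact le_csSup ⟨5 ^ d, hb⟩ ⟨t, ht, rfl⟩
  refine ⟨s.image fun c => fun j => c j / 2, Finset.card_image_le.trans (hcard s hs), ?_, ?_⟩
  · intro u hu
    obtain ⟨c, hc, rfl⟩ := Finset.mem_image.1 hu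
    have := hs.1 c hc
    have h2 : ‖c‖ ^ 2 = 4 := by rw [this]; norm_num
    rw [EuclideanSpace.norm_sq_eq] at h2
    simp only [Real.norm_eq_abs, sq_abs] at h2
    simp only [div_pow, ← Finset.sum_div, h2]
    norm_num
  · intro x hx
    set y : EuclideanSpace ℝ (Fin d) := WithLp.toLp 2 fun j => 2 * x j with hy
    have hy2 : ‖y‖ = 2 := by
      rw [EuclideanSpace.norm_eq]
      simp only [hy, Real.norm_eq_abs, sq_abs, mul_pow, ← Finset.mul_sum, hx]
      rw [show (2 : ℝ) ^ 2 * 1 = 2 ^ 2 by norm_num]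
      simp
    have hex : ∃ c ∈ s, ‖y - c‖ < 1 := by
      by_contra hcon
      push Not at hcon
      have hys : y ∉ s := fun h => by
        have := hcon y h
        simp at this
        linarith
      have hP : P (insert y s) := by
        refine ⟨fun c hc => ?_, fun c hc e he hce => ?_⟩
        · rcases Finset.mem_insert.1 hc with rfl | hc
          · exact hy2
          · exact hs.1 c hc
        · rcases Finset.mem_insert.1 hc with rfl | hc <;>
            rcases Finset.mem_insert.1 he with rfl | he
          · exact absurd rfl hce
          · exact hcon e he
          · rw [norm_sub_rev]; exact hcon c hc
          · exact hs.2 c hc e he hce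
      have := hmax _ hP
      rw [Finset.card_insert_of_notMem hys] at this
      omega
    obtain ⟨c, hc, hyc⟩ := hex
    refine ⟨_, Finset.mem_image_of_mem _ hc, ?_⟩
    have h1 : ‖y - c‖ ^ 2 ≤ 1 := by
      have := norm_nonneg (y - c)
      nlinarith
    rw [EuclideanSpace.norm_sq_eq] at h1
    simp only [Real.norm_eq_abs, sq_abs, PiLp.sub_apply, hy] at h1
    have h2 : ∀ j, (x j - c j / 2) ^ 2 = (2 * x j - c j) ^ 2 / 4 := fun j => by ring
    simp only [h2, ← Finset.sum_div]
    linarith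

/-- `S` is a `1/2`-net of unit vectors in the unit sphere of `ℝ^d`. -/
def IsSphereNet {d : ℕ} (S : Finset (Fin d → ℝ)) : Prop :=
  (∀ u ∈ S, ∑ j, u j ^ 2 = 1) ∧
    ∀ x : Fin d → ℝ, ∑ j, x j ^ 2 = 1 → ∃ u ∈ S, ∑ j, (x j - u j) ^ 2 ≤ 1 / 4

namespace IsSphereNet

variable {d : ℕ} {S : Finset (Fin d → ℝ)}

lemma sum_sq_le_of_linear (hS : IsSphereNet S) {p : Fin d → ℝ} {β : ℝ}
    (h : ∀ u ∈ S, |∑ j, u j * p j| ≤ β) : ∑ j, p j ^ 2 ≤ (2 * β) ^ 2 := by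
  set q := ∑ j, p j ^ 2 with hq
  have hq0 : 0 ≤ q := Finset.sum_nonneg fun _ _ => sq_nonneg _
  rcases hq0.eq_or_lt with h0 | h0
  · rw [← h0]; positivity
  have hs : 0 < √q := Real.sqrt_pos.2 h0
  have hs2 : √q ^ 2 = q := Real.sq_sqrt hq0
  obtain ⟨u, hu, hxu⟩ := hS.2 (fun j => p j / √q) (by
    simp only [div_pow, ← Finset.sum_div, hs2, ← hq]
    exact div_self h0.ne')
  have h1 : √q = ∑ j, u j * p j + ∑ j, (p j / √q - u j) * p j := by
    rw [← Finset.sum_add_distrib]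
    have : ∀ j, u j * p j + (p j / √q - u j) * p j = p j ^ 2 / √q := fun j => by ring
    simp only [this, ← Finset.sum_div, ← hq]
    rw [eq_div_iff hs.ne', ← hs2]
    simp [sq]
  have h2 : (∑ j, (p j / √q - u j) * p j) ^ 2 ≤ (√q / 2) ^ 2 := by
    refine (Finset.sum_mul_sq_le_sq_mul_sq _ _ _).trans ?_
    rw [div_pow, hs2, ← hq]
    nlinarith
  have h3 := abs_le_of_sq_le_sq' h2 (by positivity)
  have h4 := (abs_le.1 (h u hu)).2
  have h5 : √q ≤ 2 * β := by linarith
  rw [← hs2]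
  gcongr

lemma abs_le_of_quadratic (hS : IsSphereNet S) {Q : (Fin d → ℝ) → ℝ}
    (hpol : ∀ x u : Fin d → ℝ, 4 * (Q x - Q u) = Q (fun j => 2 * (x j - u j) + (x j + u j) / 2) -
      Q (fun j => 2 * (x j - u j) - (x j + u j) / 2))
    (hhom : ∀ (c : ℝ) (x : Fin d → ℝ), Q (fun j => c * x j) = c ^ 2 * Q x)
    {b : ℝ} (hb0 : 0 ≤ b) (hb : ∀ x, |Q x| ≤ b * ∑ j, x j ^ 2) {β : ℝ} (hβ : 0 ≤ β)
    (h : ∀ u ∈ S, |Q u| ≤ β) (x : Fin d → ℝ) : |Q x| ≤ 32 * β * ∑ j, x j ^ 2 := by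
  set t : Set ℝ := {B | 0 ≤ B ∧ ∀ x, |Q x| ≤ B * ∑ j, x j ^ 2} with ht
  have hsum0 : ∀ x : Fin d → ℝ, 0 ≤ ∑ j, x j ^ 2 :=
    fun x => Finset.sum_nonneg fun _ _ => sq_nonneg _
  have hstep : ∀ B ∈ t, β + 31 / 32 * B ∈ t := by
    rintro B ⟨hB0, hB⟩
    refine ⟨by positivity, fun x => ?_⟩
    rcases (hsum0 x).eq_or_lt with h0 | h0
    · have := hB x
      rw [← h0] at this ⊢
      simpa using this
    set r := √(∑ j, x j ^ 2) with hr
    have hr0 : 0 < r := Real.sqrt_pos.2 h0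
    have hr2 : r ^ 2 = ∑ j, x j ^ 2 := Real.sq_sqrt (hsum0 x)
    set y : Fin d → ℝ := fun j => x j / r with hy
    have hy1 : ∑ j, y j ^ 2 = 1 := by
      simp only [hy, div_pow, ← Finset.sum_div, hr2]
      exact div_self h0.ne'
    have hxy : Q x = r ^ 2 * Q y := by
      rw [← hhom]
      congr 1
      funext j
      simp only [hy]
      field_simp
    obtain ⟨u, hu, hyu⟩ := hS.2 y hy1
    have hu1 := hS.1 u hu
    have e1 : ∑ j, (2 * (y j - u j) + (y j + u j) / 2) ^ 2 =
        15 / 4 * ∑ j, (y j - u j) ^ 2 + 5 / 2 * ∑ j, y j ^ 2 - 3 / 2 * ∑ j, u j ^ 2 := by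
      simp only [Finset.mul_sum, ← Finset.sum_add_distrib, ← Finset.sum_sub_distrib]
      exact Finset.sum_congr rfl fun j _ => by ring
    have e2 : ∑ j, (2 * (y j - u j) - (y j + u j) / 2) ^ 2 =
        15 / 4 * ∑ j, (y j - u j) ^ 2 - 3 / 2 * ∑ j, y j ^ 2 + 5 / 2 * ∑ j, u j ^ 2 := by
      simp only [Finset.mul_sum, ← Finset.sum_add_distrib, ← Finset.sum_sub_distrib]
      exact Finset.sum_congr rfl fun j _ => by ring
    have h1 := hB fun j => 2 * (y j - u j) + (y j + u j) / 2
    have h2 := hB fun j => 2 * (y j - u j) - (y j + u j) / 2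
    have h3 := hpol y u
    have h4 := h u hu
    rw [e1, hy1, hu1] at h1
    rw [e2, hy1, hu1] at h2
    have h5 : |Q y| ≤ β + 31 / 32 * B := by
      rw [abs_le] at h1 h2 h4 ⊢
      constructor <;> nlinarith
    rw [hxy, ← hr2, abs_mul, abs_of_nonneg (sq_nonneg r), mul_comm]
    gcongr
  have hbdd : BddBelow t := ⟨0, fun B hB => hB.1⟩
  have hne : t.Nonempty := ⟨b, hb0, hb⟩
  have hmem : sInf t ∈ t := by
    refine ⟨le_csInf hne fun B hB => hB.1, fun x => ?_⟩
    rcases (hsum0 x).eq_or_lt with h0 | h0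
    · have := hb x
      rw [← h0] at this ⊢
      simpa using this
    · rw [← div_le_iff₀ h0]
      refine le_csInf hne fun B hB => ?_
      rw [div_le_iff₀ h0]
      exact hB.2 x
  have hle := csInf_le hbdd (hstep _ hmem)
  refine (hmem.2 x).trans ?_
  have := hsum0 x
  gcongr
  linarith

end IsSphereNet

lemma specNorm_le_of_quadratic {n : ℕ} {A : Matrix (Fin n) (Fin n) ℝ} (hA : Aᵀ = A) {q : ℝ}
    (hq : 0 ≤ q) (h : ∀ x : Fin n → ℝ, |x ⬝ᵥ A *ᵥ x| ≤ q * ∑ j, x j ^ 2) : specNorm A ≤ q := by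
  refine ContinuousLinearMap.opNorm_le_bound _ hq fun x => ?_
  set T := Matrix.toEuclideanLin A with hT
  have hsym : T.IsSymmetric := by
    rw [hT, Matrix.isSymmetric_toEuclideanLin_iff]
    rwa [Matrix.IsHermitian, Matrix.conjTranspose_eq_transpose_of_trivial]
  have hQ : ∀ z, |inner ℝ (T z) z| ≤ q * ‖z‖ ^ 2 := by
    intro z
    have := h (WithLp.ofLp z)
    rw [EuclideanSpace.norm_sq_eq]
    simp only [Real.norm_eq_abs, sq_abs]
    convert! this using 2
  have hpol : ∀ y z, 4 * inner ℝ (T y) z = inner ℝ (T (y + z)) (y + z) -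
      inner ℝ (T (y - z)) (y - z) := by
    intro y z
    have h1 := hsym z y
    rw [real_inner_comm] at h1
    simp only [map_add, map_sub, inner_add_left, inner_add_right, inner_sub_left, inner_sub_right]
    have h2 : inner ℝ (T z) y = inner ℝ (T y) z := by
      rw [real_inner_comm, h1, real_inner_comm]
    linarith
  have hB : ∀ y z, inner ℝ (T y) z ≤ q * (‖y‖ ^ 2 + ‖z‖ ^ 2) / 2 := by
    intro y z
    have h1 := (abs_le.1 (hQ (y + z))).2
    have h2 := (abs_le.1 (hQ (y - z))).1
    have h3 := hpol y z
    have h4 := parallelogram_law_with_norm ℝ y z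
    nlinarith
  change ‖T x‖ ≤ q * ‖x‖
  have key : q * ‖T x‖ ^ 2 ≤ q * (‖T x‖ ^ 2 + (q * ‖x‖) ^ 2) / 2 := by
    have h1 := hB (q • x) (T x)
    rw [map_smul, inner_smul_left, real_inner_self_eq_norm_sq, norm_smul,
      Real.norm_of_nonneg hq] at h1
    simp only [conj_trivial] at h1
    linarith
  rcases hq.eq_or_lt with h0 | h0
  · have h1 := hB x (T x)
    rw [← h0, real_inner_self_eq_norm_sq] at h1
    have : ‖T x‖ = 0 := by
      have h2 : ‖T x‖ ^ 2 ≤ 0 := by linarith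
      exact pow_eq_zero_iff two_ne_zero |>.1 (le_antisymm h2 (sq_nonneg _))
    rw [this, ← h0, zero_mul]
  · have h2 : ‖T x‖ ^ 2 ≤ (q * ‖x‖) ^ 2 := by nlinarith
    exact (abs_le_of_sq_le_sq' h2 (by positivity)).2

lemma lpNorm_four_pow {k : ℕ} (v : Fin k → ℝ) : lpNorm 4 v ^ 4 = ∑ i, v i ^ 4 := by
  unfold _root_.lpNorm
  have h0 : 0 ≤ ∑ i, |v i| ^ (4 : ℝ) := Finset.sum_nonneg fun i _ => by positivity
  rw [← Real.rpow_natCast, ← Real.rpow_mul h0]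
  norm_num
  refine Finset.sum_congr rfl fun i _ => ?_
  exact (by decide : Even 4).pow_abs _

lemma lpNorm_nonneg {k : ℕ} (p : ℝ) (v : Fin k → ℝ) : 0 ≤ lpNorm p v := by
  unfold _root_.lpNorm
  have h0 : 0 ≤ ∑ i, |v i| ^ p := Finset.sum_nonneg fun i _ => by positivity
  positivity

lemma lpNorm_six_cube {k : ℕ} (v : Fin k → ℝ) : lpNorm 6 v ^ 3 = √(∑ i, v i ^ 6) := by
  have h : lpNorm 6 v ^ 6 = ∑ i, v i ^ 6 := by
    unfold _root_.lpNorm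
    have h0 : 0 ≤ ∑ i, |v i| ^ (6 : ℝ) := Finset.sum_nonneg fun i _ => by positivity
    rw [← Real.rpow_natCast, ← Real.rpow_mul h0]
    norm_num
    refine Finset.sum_congr rfl fun i _ => ?_
    exact (by decide : Even 6).pow_abs _
  rw [← h, show lpNorm 6 v ^ 6 = (lpNorm 6 v ^ 3) ^ 2 by ring,
    Real.sqrt_sq (pow_nonneg (lpNorm_nonneg _ _) _)]

lemma abs_le_supNorm {k : ℕ} (v : Fin k → ℝ) (i : Fin k) : |v i| ≤ supNorm v :=
  le_ciSup (f := fun i => |v i|) (Set.finite_range _).bddAbove i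

lemma supNorm_nonneg {k : ℕ} (v : Fin k → ℝ) : 0 ≤ supNorm v :=
  Real.iSup_nonneg fun _ => abs_nonneg _

lemma eucNorm_sq {k : ℕ} (v : Fin k → ℝ) : eucNorm v ^ 2 = ∑ i, v i ^ 2 :=
  Real.sq_sqrt (Finset.sum_nonneg fun _ _ => sq_nonneg _)

lemma rowCat_zero {d : ℕ} (a : ℝ) (b : Fin d → ℝ) : rowCat (n := d + 1) a b 0 = a := by
  simp [rowCat]

lemma rowCat_succ {d : ℕ} (a : ℝ) (b : Fin d → ℝ) (j : Fin d) :
    rowCat (n := d + 1) a b j.succ = b j := by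
  simp [rowCat]

lemma dotProduct_specMat_mulVec {N n : ℕ} (Y : Matrix (Fin N) (Fin n) ℝ) (x : Fin n → ℝ) :
    x ⬝ᵥ specMat Y *ᵥ x =
      ∑ i, ((∑ j, (Y i j) ^ 2) - ((n : ℝ) - 1) / N) * (∑ j, Y i j * x j) ^ 2
        - (3 : ℝ) / N * ∑ j, x j ^ 2 := by
  have h1 : ∀ y : Fin n → ℝ, x ⬝ᵥ vecMulVec y y *ᵥ x = (∑ j, y j * x j) ^ 2 := by
    intro y
    rw [vecMulVec_mulVec, op_smul_eq_smul, dotProduct_smul, smul_eq_mul, sq, dotProduct_comm x y]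
    rfl
  have h2 : x ⬝ᵥ x = ∑ j, x j ^ 2 := by simp [dotProduct, sq]
  simp only [specMat, sub_mulVec, dotProduct_sub, sum_mulVec, smul_mulVec, dotProduct_sum,
    dotProduct_smul, smul_eq_mul, h1, one_mulVec, h2]

lemma transpose_specMat {N n : ℕ} (Y : Matrix (Fin N) (Fin n) ℝ) : (specMat Y)ᵀ = specMat Y := by
  simp [specMat, transpose_sum, transpose_vecMulVec]

lemma dotProduct_e1vec {d : ℕ} (x : Fin (d + 1) → ℝ) : ∑ j, e1vec (d + 1) j * x j = x 0 := by
  simp [e1vec]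

/-- The quadratic form of the centred matrix, expanded along the first coordinate. -/
lemma quadraticForm_specMat_sub {N d : ℕ} (hN : 0 < N) (v : Fin N → ℝ) (g : Fin N → Fin d → ℝ)
    (x : Fin (d + 1) → ℝ) :
    x ⬝ᵥ (specMat (gaussBasis (n := d + 1) v fun i j => (√N)⁻¹ * g i j)
        - ((∑ i, v i ^ 4) - 3 / N) • vecMulVec (e1vec (d + 1)) (e1vec (d + 1))) *ᵥ x =
      x 0 ^ 2 * ((∑ i, v i ^ 2 * ∑ j, (g i j ^ 2 - 1)) / N)
      + 2 * x 0 * ((∑ j : Fin d, x j.succ * ∑ i, v i ^ 3 * g i j) / √N)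
      + 2 * x 0 * ((∑ j : Fin d, x j.succ * ∑ i, v i * ((∑ k, (g i k ^ 2 - 1)) * g i j)) / √N ^ 3)
      + (∑ i, v i ^ 2 * (∑ j, x j.succ * g i j) ^ 2
          - (∑ i, v i ^ 2) * ∑ j : Fin d, x j.succ ^ 2) / N
      + (∑ i, (∑ k, (g i k ^ 2 - 1)) * (∑ j, x j.succ * g i j) ^ 2
          - 2 * N * ∑ j : Fin d, x j.succ ^ 2) / (N : ℝ) ^ 2
      + (∑ i, v i ^ 2 - 1) / N * ∑ j : Fin d, x j.succ ^ 2 := by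
  have hN' : (0 : ℝ) < N := by exact_mod_cast hN
  have hr : 0 < √(N : ℝ) := Real.sqrt_pos.2 hN'
  have hr2 : √(N : ℝ) ^ 2 = N := Real.sq_sqrt hN'.le
  set r := √(N : ℝ) with hrd
  set s := x 0
  set h : Fin N → ℝ := fun i => ∑ j, x j.succ * g i j with hh
  set a : Fin N → ℝ := fun i => ∑ k, (g i k ^ 2 - 1) with ha
  set U := ∑ j : Fin d, x j.succ ^ 2 with hU
  have hrow : ∀ i, ∑ j, gaussBasis (n := d + 1) v (fun i j => r⁻¹ * g i j) i j * x j =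
      v i * s + h i / r := by
    intro i
    rw [Fin.sum_univ_succ]
    simp only [gaussBasis, of_apply, rowCat_zero, rowCat_succ, hh, Finset.sum_div]
    congr 1
    exact Finset.sum_congr rfl fun j _ => by ring
  have hnorm : ∀ i, ∑ j, gaussBasis (n := d + 1) v (fun i j => r⁻¹ * g i j) i j ^ 2
      - (((d + 1 : ℕ) : ℝ) - 1) / N = v i ^ 2 + a i / N := by
    intro i
    rw [Fin.sum_univ_succ]
    simp only [gaussBasis, of_apply, rowCat_zero, rowCat_succ, ha, mul_pow, inv_pow, hr2,
      ← Finset.mul_sum, Finset.sum_sub_distrib]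
    simp
    ring
  have hx : ∑ j, x j ^ 2 = s ^ 2 + U := Fin.sum_univ_succ _
  have hD : x ⬝ᵥ vecMulVec (e1vec (d + 1)) (e1vec (d + 1)) *ᵥ x = s ^ 2 := by
    rw [vecMulVec_mulVec, op_smul_eq_smul, dotProduct_smul, smul_eq_mul, dotProduct_comm x, sq]
    exact congrArg₂ (· * ·) (dotProduct_e1vec x) (dotProduct_e1vec x)
  rw [sub_mulVec, dotProduct_sub, smul_mulVec, dotProduct_smul, hD, dotProduct_specMat_mulVec]
  simp only [hrow, hnorm, hx, smul_eq_mul]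
  have e2 : ∑ j : Fin d, x j.succ * ∑ i, v i ^ 3 * g i j = ∑ i, v i ^ 3 * h i := by
    simp only [hh, Finset.mul_sum]
    rw [Finset.sum_comm]
    exact Finset.sum_congr rfl fun i _ => Finset.sum_congr rfl fun j _ => by ring
  have e3 : ∑ j : Fin d, x j.succ * ∑ i, v i * (a i * g i j) = ∑ i, v i * (a i * h i) := by
    simp only [hh, Finset.mul_sum]
    rw [Finset.sum_comm]
    exact Finset.sum_congr rfl fun i _ => Finset.sum_congr rfl fun j _ => by ring
  have e1 : ∑ i, (v i ^ 2 + a i / N) * (v i * s + h i / r) ^ 2 =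
      s ^ 2 * ∑ i, v i ^ 4 + s ^ 2 * ((∑ i, v i ^ 2 * a i) / N)
      + 2 * s * ((∑ i, v i ^ 3 * h i) / r) + 2 * s * ((∑ i, v i * (a i * h i)) / r ^ 3)
      + (∑ i, v i ^ 2 * h i ^ 2) / N + (∑ i, a i * h i ^ 2) / N ^ 2 := by
    simp only [Finset.mul_sum, Finset.sum_div, ← Finset.sum_add_distrib]
    refine Finset.sum_congr rfl fun i _ => ?_
    rw [← hr2]
    field_simp
    ring
  rw [e1, e2, e3]
  field_simp
  ring

lemma two_mul_abs_mul_le {s p u b : ℝ} (hb : 0 ≤ b) (hu : 0 ≤ u) (h : p ^ 2 ≤ b ^ 2 * u) :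
    |2 * s * p| ≤ b * (s ^ 2 + u) := by
  have hu2 := Real.sq_sqrt hu
  have h1 : |p| ≤ b * √u := by
    apply abs_le_of_sq_le_sq _ (by positivity)
    rw [mul_pow, hu2]
    exact h
  rw [abs_mul, abs_mul, abs_two]
  have h2 : |s| * |p| ≤ |s| * (b * √u) := by gcongr
  have h3 : 2 * (|s| * √u) ≤ s ^ 2 + u := by
    nlinarith [sq_nonneg (|s| - √u), sq_abs s]
  nlinarith

lemma specNorm_specMat_sub_le {N d : ℕ} (hN : 0 < N) (v : Fin N → ℝ) (g : Fin N → Fin d → ℝ)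
    {b₁ b₂ b₃ b₄ b₅ : ℝ} (hb₁ : 0 ≤ b₁) (hb₂ : 0 ≤ b₂) (hb₃ : 0 ≤ b₃) (hb₄ : 0 ≤ b₄)
    (hb₅ : 0 ≤ b₅)
    (h₁ : |∑ i, v i ^ 2 * ∑ j, (g i j ^ 2 - 1)| ≤ b₁)
    (h₂ : ∑ j, (∑ i, v i ^ 3 * g i j) ^ 2 ≤ b₂ ^ 2)
    (h₃ : ∑ j, (∑ i, v i * ((∑ k, (g i k ^ 2 - 1)) * g i j)) ^ 2 ≤ b₃ ^ 2)
    (h₄ : ∀ u : Fin d → ℝ, |∑ i, v i ^ 2 * (∑ j, u j * g i j) ^ 2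
      - (∑ i, v i ^ 2) * ∑ j, u j ^ 2| ≤ b₄ * ∑ j, u j ^ 2)
    (h₅ : ∀ u : Fin d → ℝ, |∑ i, (∑ k, (g i k ^ 2 - 1)) * (∑ j, u j * g i j) ^ 2
      - 2 * N * ∑ j, u j ^ 2| ≤ b₅ * ∑ j, u j ^ 2) :
    specNorm (specMat (gaussBasis (n := d + 1) v fun i j => (√N)⁻¹ * g i j)
        - (lpNorm 4 v ^ 4 - 3 / N) • vecMulVec (e1vec (d + 1)) (e1vec (d + 1))) ≤
      b₁ / N + b₂ / √N + b₃ / √N ^ 3 + b₄ / N + b₅ / (N : ℝ) ^ 2 + |eucNorm v ^ 2 - 1| / N := by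
  have hN' : (0 : ℝ) < N := by exact_mod_cast hN
  have hr : 0 < √(N : ℝ) := Real.sqrt_pos.2 hN'
  rw [lpNorm_four_pow, eucNorm_sq]
  refine specNorm_le_of_quadratic ?_ (by positivity) fun x => ?_
  · simp [transpose_specMat, transpose_vecMulVec]
  rw [quadraticForm_specMat_sub hN, Fin.sum_univ_succ]
  set U := ∑ j : Fin d, x j.succ ^ 2 with hU
  have hU0 : 0 ≤ U := Finset.sum_nonneg fun _ _ => sq_nonneg _
  have hcs : ∀ (p : Fin d → ℝ) (b : ℝ), ∑ j, p j ^ 2 ≤ b ^ 2 →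
      (∑ j : Fin d, x j.succ * p j) ^ 2 ≤ b ^ 2 * U := by
    intro p b hp
    refine (Finset.sum_mul_sq_le_sq_mul_sq _ _ _).trans ?_
    rw [mul_comm]
    gcongr
  have i1 : |x 0 ^ 2 * ((∑ i, v i ^ 2 * ∑ j, (g i j ^ 2 - 1)) / N)| ≤ b₁ / N * x 0 ^ 2 := by
    rw [abs_mul, abs_div, abs_of_pos hN', abs_of_nonneg (sq_nonneg _), mul_comm]
    gcongr
  have i2 : |2 * x 0 * ((∑ j : Fin d, x j.succ * ∑ i, v i ^ 3 * g i j) / √N)| ≤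
      b₂ / √N * (x 0 ^ 2 + U) := by
    refine two_mul_abs_mul_le (by positivity) hU0 ?_
    rw [div_pow, div_pow, div_mul_eq_mul_div]
    gcongr
    exact hcs _ _ h₂
  have i3 : |2 * x 0 * ((∑ j : Fin d, x j.succ *
      ∑ i, v i * ((∑ k, (g i k ^ 2 - 1)) * g i j)) / √N ^ 3)| ≤
      b₃ / √N ^ 3 * (x 0 ^ 2 + U) := by
    refine two_mul_abs_mul_le (by positivity) hU0 ?_
    rw [div_pow, div_pow, div_mul_eq_mul_div]
    gcongr
    exact hcs _ _ h₃
  have i4 : |(∑ i, v i ^ 2 * (∑ j : Fin d, x j.succ * g i j) ^ 2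
      - (∑ i, v i ^ 2) * U) / N| ≤ b₄ / N * U := by
    rw [abs_div, abs_of_pos hN', div_mul_eq_mul_div]
    gcongr
    exact h₄ fun j => x j.succ
  have i5 : |(∑ i, (∑ k, (g i k ^ 2 - 1)) * (∑ j : Fin d, x j.succ * g i j) ^ 2
      - 2 * N * U) / (N : ℝ) ^ 2| ≤ b₅ / (N : ℝ) ^ 2 * U := by
    rw [abs_div, abs_of_pos (pow_pos hN' 2), div_mul_eq_mul_div]
    gcongr
    exact h₅ fun j => x j.succ
  have i6 : |(∑ i, v i ^ 2 - 1) / N * U| ≤ |∑ i, v i ^ 2 - 1| / N * U := by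
    rw [abs_mul, abs_div, abs_of_pos hN', abs_of_nonneg hU0]
  refine (abs_add_le _ _).trans ((add_le_add ((abs_add_le _ _).trans (add_le_add
    ((abs_add_le _ _).trans (add_le_add ((abs_add_le _ _).trans (add_le_add
    ((abs_add_le _ _).trans (add_le_add i1 i2)) i3)) i4)) i5)) i6).trans ?_)
  have j1 : 0 ≤ b₁ / N * U := by positivity
  have j4 : 0 ≤ b₄ / N * x 0 ^ 2 := by positivity
  have j5 : 0 ≤ b₅ / (N : ℝ) ^ 2 * x 0 ^ 2 := by positivity
  have j6 : 0 ≤ |∑ i, v i ^ 2 - 1| / N * x 0 ^ 2 := by positivity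
  linarith

lemma measureReal_le_two_mul_of_le {α : Type*} [MeasurableSpace α] {μ : Measure α} {A : Set α}
    {c : ℝ} (hc : 0 ≤ c) (h : μ A ≤ 2 * ENNReal.ofReal c) : μ.real A ≤ 2 * c := by
  refine ENNReal.toReal_le_of_le_ofReal (by positivity) (h.trans_eq ?_)
  rw [ENNReal.ofReal_mul zero_le_two, ENNReal.ofReal_ofNat]

lemma SubExpOn.tail_real {α : Type*} [MeasurableSpace α] {γ : Measure α} [IsProbabilityMeasure γ]
    {G : Set α} {f : α → ℝ} {m e V R : ℝ} {ι : Type*} [Fintype ι]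
    (H : SubExpOn γ G f m e V R) (hV : 0 ≤ V) (hR : 0 ≤ R) (w : ι → ℝ) {W K : ℝ}
    (hK : 0 < K) (hW0 : 0 ≤ W) (hW : ∀ i, |w i| ≤ W) :
    (Measure.pi (fun _ : ι => γ)).real ({x | ∀ i, x i ∈ G} ∩
      {x | e * ∑ i, |w i| + 2 * √(K * (V * ∑ i, w i ^ 2)) + K * (R * W)
        < |∑ i, w i * f (x i) - m * ∑ i, w i|}) ≤ 2 * Real.exp (-K) :=
  measureReal_le_two_mul_of_le (Real.exp_pos _).le (H.tail hV hR w hK hW0 hW)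

lemma SubExpOn.mono_bias {α : Type*} [MeasurableSpace α] {γ : Measure α}
    {G : Set α} {f : α → ℝ} {m e e' V R : ℝ}
    (H : SubExpOn γ G f m e V R) (he : e ≤ e') : SubExpOn γ G f m e' V R := by
  intro s hs
  refine ⟨(H s hs).1, (H s hs).2.trans ?_⟩
  gcongr

lemma measureReal_sum_sq_sub_one_tail (d : ℕ) {L : ℝ} (hL : 0 < L) :
    (gaussVec d 1).real {x | 8 * (√(d * L) + L) < |∑ j, (x j ^ 2 - 1)|} ≤
      2 * Real.exp (-(2 * L)) :=
  measureReal_le_two_mul_of_le (Real.exp_pos _).le (sum_sq_sub_one_tail d hL)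

lemma bias_le {N : ℕ} (d : ℕ) {L δ : ℝ} (hN : 0 < N) (hL : 0 < L) (hδ0 : 0 < δ) (hδ : δ < 1)
    (hexp : Real.exp (-L) = δ / N) :
    40960000 * d / (N : ℝ) +
      N * (gaussVec d 1).real {x | 8 * (√(d * L) + L) < |∑ j, (x j ^ 2 - 1)|} ≤
      40960000 * (d + 1) / N := by
  have hN' : (0 : ℝ) < N := by exact_mod_cast hN
  have h1 := measureReal_sum_sq_sub_one_tail d hL
  have h2 : Real.exp (-(2 * L)) = (δ / N) ^ 2 := by
    rw [← hexp, ← Real.exp_nat_mul]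
    congr 1
    push_cast
    ring
  rw [h2] at h1
  have h3 : N * (2 * (δ / N) ^ 2) ≤ 2 / N := by
    rw [div_pow, le_div_iff₀ hN']
    have : N * (2 * (δ ^ 2 / (N : ℝ) ^ 2)) * N = 2 * δ ^ 2 := by field_simp
    rw [this]
    nlinarith
  have h4 : (N : ℝ) * (gaussVec d 1).real {x | 8 * (√(d * L) + L) < |∑ j, (x j ^ 2 - 1)|} ≤
    N * (2 * (δ / N) ^ 2) := by gcongr
  have h5 : (40960000 : ℝ) * (d + 1) / N = 40960000 * d / N + 40960000 / N := by ring
  rw [h5]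
  have h6 : (2 : ℝ) / N ≤ 40960000 / N := by gcongr; norm_num
  linarith

lemma five_pow_mul_exp_le (d : ℕ) (L : ℝ) :
    (5 : ℝ) ^ d * Real.exp (-(2 * d + 2 * L)) ≤ Real.exp (-(2 * L)) := by
  have h5 : (5 : ℝ) ≤ Real.exp 2 := by
    have := Real.quadratic_le_exp_of_nonneg (x := 2) (by norm_num)
    linarith
  have h : (5 : ℝ) ^ d ≤ Real.exp (2 * d) := by
    rw [mul_comm, Real.exp_nat_mul]
    gcongr
  calc (5 : ℝ) ^ d * Real.exp (-(2 * d + 2 * L))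
      ≤ Real.exp (2 * d) * Real.exp (-(2 * d + 2 * L)) := by gcongr
    _ = Real.exp (-(2 * L)) := by rw [← Real.exp_add]; ring_nf

lemma exists_union_bound {Ω ι κ : Type*} [MeasurableSpace Ω] {μ : Measure Ω}
    [IsProbabilityMeasure μ] [Fintype ι] {S : Finset κ} {A B : Set Ω} {C : ι → Set Ω}
    {D E F : κ → Set Ω} {a b c e : ℝ} (hA : μ.real A ≤ a) (hB : μ.real B ≤ b)
    (hC : ∀ i, μ.real (C i) ≤ c) (hD : ∀ u ∈ S, μ.real (D u) ≤ e)
    (hE : ∀ u ∈ S, μ.real (E u) ≤ e) (hF : ∀ u ∈ S, μ.real (F u) ≤ e) :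
    ∃ bad : Set Ω, μ.real bad ≤ a + b + Fintype.card ι * c + S.card * (e + e + e) ∧
      ∀ x ∉ bad, x ∉ A ∧ x ∉ B ∧ (∀ i, x ∉ C i) ∧ (∀ u ∈ S, x ∉ D u) ∧ (∀ u ∈ S, x ∉ E u) ∧
        ∀ u ∈ S, x ∉ F u := by
  refine ⟨A ∪ B ∪ (⋃ i, C i) ∪ ⋃ u ∈ S, (D u ∪ E u ∪ F u), ?_, fun x hx => ?_⟩
  · refine (measureReal_union_le _ _).trans (add_le_add ((measureReal_union_le _ _).trans
      (add_le_add ((measureReal_union_le _ _).trans (add_le_add hA hB)) ?_)) ?_)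
    · refine (measureReal_iUnion_fintype_le _).trans ((Finset.sum_le_sum fun i _ => hC i).trans ?_)
      simp
    · refine (measureReal_biUnion_finset_le _ _).trans ((Finset.sum_le_sum fun u hu =>
        (measureReal_union_le _ _).trans (add_le_add ((measureReal_union_le _ _).trans
          (add_le_add (hD u hu) (hE u hu))) (hF u hu))).trans ?_)
      rw [Finset.sum_const, nsmul_eq_mul]
  · simp only [Set.mem_union, Set.mem_iUnion, not_or, not_exists] at hx
    exact ⟨hx.1.1.1, hx.1.1.2, hx.1.2, fun u hu => (hx.2 u hu).1.1, fun u hu => (hx.2 u hu).1.2,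
      fun u hu => (hx.2 u hu).2⟩

/-- The event on which all the linear and quadratic statistics of the Gaussian rows that enter the
spectral norm bound are simultaneously controlled. -/
lemma exists_bad_event {N d : ℕ} (hN : 12 ≤ N) (hdN : d ≤ N) (v : Fin N → ℝ) {L δ : ℝ} (hL : 0 < L)
    (hδ0 : 0 < δ) (hδ : δ < 1) (hexp : Real.exp (-L) = δ / N) {S : Finset (Fin d → ℝ)}
    (hcard : S.card ≤ 5 ^ d) (hS : ∀ u ∈ S, ∑ j, u j ^ 2 = 1) :
    ∃ bad : Set (Fin N → Fin d → ℝ), (iidGaussVec N d 1).real bad ≤ δ ∧ ∀ g ∉ bad,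
      |∑ i, v i ^ 2 * ∑ j, (g i j ^ 2 - 1)| ≤
        2 * √(2 * L * (4 * d * ∑ i, (v i ^ 2) ^ 2)) + 2 * L * (4 * supNorm v ^ 2) ∧
      (∀ u ∈ S, |∑ i, v i ^ 3 * ∑ j, u j * g i j| ≤
        2 * √((2 * d + 2 * L) * (1 / 2 * ∑ i, (v i ^ 3) ^ 2))) ∧
      (∀ j, |∑ i, v i * ((∑ k, (g i k ^ 2 - 1)) * g i j)| ≤
        40960000 * (d + 1) / N * ∑ i, |v i| +
          2 * √(2 * L * (40960000 * d * ∑ i, v i ^ 2)) +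
          2 * L * (16 * (8 * (√(d * L) + L)) * supNorm v)) ∧
      (∀ u ∈ S, |∑ i, v i ^ 2 * ((∑ j, u j * g i j) ^ 2 - 1)| ≤
        2 * √((2 * d + 2 * L) * (4 * ∑ i, (v i ^ 2) ^ 2)) +
          (2 * d + 2 * L) * (4 * supNorm v ^ 2)) ∧
      (∀ u ∈ S, |∑ i, (∑ k, (g i k ^ 2 - 1)) * (∑ j, u j * g i j) ^ 2 - 2 * (N : ℝ)| ≤
        40960000 * (d + 1) / N * N + 2 * √((2 * d + 2 * L) * (40960000 * d * N)) +
          (2 * d + 2 * L) * (16 * (8 * (√(d * L) + L)))) := by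
  have hN0 : 0 < N := by omega
  have hN' : (0 : ℝ) < N := by exact_mod_cast hN0
  set T := 8 * (√(d * L) + L) with hT
  have hT0 : 0 ≤ T := by positivity
  set G : Set (Fin d → ℝ) := {x | |∑ j, (x j ^ 2 - 1)| ≤ T} with hG
  have hGm : MeasurableSet G := measurableSet_le (by fun_prop) (by fun_prop)
  set μ := iidGaussVec N d 1 with hμ
  have hμpi : μ = Measure.pi (fun _ : Fin N => gaussVec d 1) := rfl
  have hbias := bias_le d hN0 hL hδ0 hδ hexp
  have hφ1 : ∀ x : ℝ, (fun y : ℝ => y) x ^ 2 * Real.exp (|(fun y : ℝ => y) x| / 16) ≤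
    4096 * Real.exp (x ^ 2 / 8) := sq_mul_exp_abs_le
  have hW2 : ∀ i, |v i ^ 2| ≤ supNorm v ^ 2 := fun i => by
    rw [abs_pow]
    have := abs_le_supNorm v i
    gcongr
  have hW3 : ∀ i, |v i ^ 3| ≤ supNorm v ^ 3 := fun i => by
    rw [abs_pow]
    have := abs_le_supNorm v i
    gcongr
  have hs0 := supNorm_nonneg v
  have hK : 0 < 2 * d + 2 * L := by positivity
  have hL2 : 0 < 2 * L := by positivity
  have p0 : μ.real {g | ∃ i, g i ∉ G} ≤ N * (2 * Real.exp (-(2 * L))) := by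
    have h1 : {g : Fin N → Fin d → ℝ | ∃ i, g i ∉ G} = ⋃ i, (fun g => g i) ⁻¹' Gᶜ := by
      ext g
      simp
    rw [h1]
    refine (measureReal_iUnion_fintype_le _).trans ?_
    calc _ ≤ ∑ _i : Fin N, 2 * Real.exp (-(2 * L)) := by
          refine Finset.sum_le_sum fun i _ => ?_
          have h2 := (measurePreserving_eval (fun _ : Fin N => gaussVec d 1) i).measureReal_preimage
            hGm.compl.nullMeasurableSet
          rw [hμpi]
          refine h2.trans_le (le_trans ?_ (measureReal_sum_sq_sub_one_tail d hL))
          refine measureReal_mono fun x hx => ?_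
          simp only [hG, Set.mem_compl_iff, Set.mem_ofPred_eq, not_le] at hx ⊢
          exact hx
      _ = _ := by simp
  have p1 := (subExpOn_sum_sq_sub_one d).tail_real (by positivity) (by norm_num)
    (fun i => v i ^ 2) hL2 (sq_nonneg (supNorm v)) hW2
  have p3 : ∀ j : Fin d, _ := fun j => ((subExpOn_sum_sq_sub_one_mul j (T := T) measurable_id hφ1
    hN' (integral_sum_sq_sub_one_mul_id j).1 (integral_sum_sq_sub_one_mul_id j).2).mono_bias
    hbias).tail_real (by positivity) (by positivity) v hL2 hs0 (abs_le_supNorm v)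
  have p2 : ∀ u ∈ S, _ := fun u hu => (subExpOn_inner (hS u hu)).tail_real (by norm_num) le_rfl
    (fun i => v i ^ 3) hK (pow_nonneg hs0 3) hW3
  have p4 : ∀ u ∈ S, _ := fun u hu => (subExpOn_inner_sq_sub_one (hS u hu)).tail_real
    (by norm_num) (by norm_num) (fun i => v i ^ 2) hK (sq_nonneg (supNorm v)) hW2
  have p5 : ∀ u ∈ S, _ := fun u hu => ((subExpOn_mul_comp_inner (hS u hu) (φ := fun y => y ^ 2)
    (by fun_prop) sq_sq_mul_exp_abs_le T hN' integral_sum_sq_sub_one_mul_sq).mono_bias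
    hbias).tail_real (by positivity) (by positivity) (fun _ : Fin N => 1) hK zero_le_one (by simp)
  simp only [← hμpi, ← hG] at p1 p2 p3 p4 p5
  have hμP : IsProbabilityMeasure μ := by rw [hμpi]; infer_instance
  obtain ⟨bad, hbad, hgood⟩ := exists_union_bound p0 p1 p3 p2 p4 p5
  refine ⟨bad, hbad.trans ?_, fun g hg => ?_⟩
  · have hexp2 : Real.exp (-(2 * L)) = (δ / N) ^ 2 := by
      rw [← hexp, ← Real.exp_nat_mul]
      congr 1
      push_cast
      ring
    have hx : N * (δ / N) = δ := by field_simp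
    set x := δ / N
    have hx0 : 0 < x := by positivity
    have hcard' : (S.card : ℝ) ≤ 5 ^ d := by exact_mod_cast hcard
    have hce : S.card * Real.exp (-(2 * d + 2 * L)) ≤ x ^ 2 := by
      rw [← hexp2]
      refine le_trans ?_ (five_pow_mul_exp_le d L)
      gcongr
    have hd : (d : ℝ) * x ^ 2 ≤ N * x ^ 2 := by gcongr
    have hN12 : (12 : ℝ) ≤ N := by exact_mod_cast hN
    have hx1 : N * x ^ 2 ≤ x := by
      rw [sq, ← mul_assoc, hx]
      nlinarith
    have hx2 : 12 * x ^ 2 ≤ N * x ^ 2 := by gcongr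
    have hx3 : 12 * x ≤ N * x := by gcongr
    rw [hexp2, Fintype.card_fin]
    linarith
  · obtain ⟨g0, g1, g3, g2, g4, g5⟩ := hgood g hg
    simp only [Set.mem_ofPred_eq, not_exists, not_not] at g0
    simp only [Set.mem_inter_iff, Set.mem_ofPred_eq, not_and, not_lt, Set.mem_univ, implies_true,
      forall_const, zero_mul, zero_add, sub_zero, mul_zero, add_zero, one_mul, mul_one, one_pow,
      abs_one, Finset.sum_const, Finset.card_univ, Fintype.card_fin, nsmul_eq_mul, id_eq]
      at g1 g2 g3 g4 g5
    exact ⟨g1, g2, fun j => g3 j g0, g4, fun u hu => g5 u hu g0⟩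

lemma IsSphereNet.abs_weighted_sum_sq_sub_le {N d : ℕ} {S : Finset (Fin d → ℝ)}
    (hS : IsSphereNet S) (g : Fin N → Fin d → ℝ) (w : Fin N → ℝ) {κ β : ℝ} (hβ : 0 ≤ β)
    (h : ∀ u ∈ S, |∑ i, w i * (∑ j, u j * g i j) ^ 2 - κ| ≤ β) (u : Fin d → ℝ) :
    |∑ i, w i * (∑ j, u j * g i j) ^ 2 - κ * ∑ j, u j ^ 2| ≤ 32 * β * ∑ j, u j ^ 2 := by
  refine hS.abs_le_of_quadratic
    (Q := fun u => ∑ i, w i * (∑ j, u j * g i j) ^ 2 - κ * ∑ j, u j ^ 2) ?_ ?_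
    (b := ∑ i, |w i| * ∑ j, g i j ^ 2 + |κ|) ?_ ?_ hβ ?_ u
  · intro x u
    have e1 : ∀ i, ∑ j, (2 * (x j - u j) + (x j + u j) / 2) * g i j =
        5 / 2 * ∑ j, x j * g i j - 3 / 2 * ∑ j, u j * g i j := fun i => by
      simp only [Finset.mul_sum, ← Finset.sum_sub_distrib]
      exact Finset.sum_congr rfl fun j _ => by ring
    have e2 : ∀ i, ∑ j, (2 * (x j - u j) - (x j + u j) / 2) * g i j =
        3 / 2 * ∑ j, x j * g i j - 5 / 2 * ∑ j, u j * g i j := fun i => by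
      simp only [Finset.mul_sum, ← Finset.sum_sub_distrib]
      exact Finset.sum_congr rfl fun j _ => by ring
    simp only [e1, e2]
    have h1 : ∀ A B C D E F G H : ℝ, 4 * (A - B) = E - F → 4 * (C - D) = G - H →
        4 * ((A - κ * C) - (B - κ * D)) = (E - κ * G) - (F - κ * H) := by
      intro A B C D E F G H h1 h2
      linear_combination h1 - κ * h2
    refine h1 _ _ _ _ _ _ _ _ ?_ ?_
    · rw [← Finset.sum_sub_distrib, ← Finset.sum_sub_distrib, Finset.mul_sum]
      exact Finset.sum_congr rfl fun i _ => by ring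
    · rw [← Finset.sum_sub_distrib, ← Finset.sum_sub_distrib, Finset.mul_sum]
      exact Finset.sum_congr rfl fun j _ => by ring
  · intro c x
    have e1 : ∀ i, ∑ j, c * x j * g i j = c * ∑ j, x j * g i j := fun i => by
      simp only [Finset.mul_sum, mul_assoc]
    simp only [e1, mul_pow, mul_left_comm _ (c ^ 2), ← Finset.mul_sum]
    ring
  · have : ∀ i, 0 ≤ ∑ j, g i j ^ 2 := fun i => Finset.sum_nonneg fun _ _ => sq_nonneg _
    have : 0 ≤ ∑ i, |w i| * ∑ j, g i j ^ 2 :=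
      Finset.sum_nonneg fun i _ => mul_nonneg (abs_nonneg _) (this i)
    positivity
  · intro x
    have hx : 0 ≤ ∑ j, x j ^ 2 := Finset.sum_nonneg fun _ _ => sq_nonneg _
    refine (abs_sub _ _).trans ?_
    rw [add_mul, abs_mul κ, abs_of_nonneg hx, Finset.sum_mul]
    gcongr
    refine (Finset.abs_sum_le_sum_abs _ _).trans (Finset.sum_le_sum fun i _ => ?_)
    rw [abs_mul, abs_of_nonneg (sq_nonneg (∑ j, x j * g i j)), mul_assoc]
    gcongr
    rw [mul_comm]
    exact Finset.sum_mul_sq_le_sq_mul_sq _ _ _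
  · intro u hu
    simp only [hS.1 u hu, mul_one]
    exact h u hu

lemma error_terms_le {ν ℓ s w a b m q : ℝ} (hν : 1 ≤ ν) (hℓ : 1 ≤ ℓ) (hs : 0 < s)
    (hνs : ν * s ≤ 1) (hℓs : ℓ ^ 3 * s ≤ 1) (ha : 0 ≤ a) (hb : 0 ≤ b)
    (hm : 0 ≤ m) (hq : 0 ≤ q) :
    (6 * (ν * ℓ) * a + 8 * ℓ ^ 2 * w ^ 2) * s ^ 2 + 4 * (ν + ℓ) * b * s +
      ν * (40960000 * ν ^ 2 * m * s + 19200 * (ν * ℓ) * m + 256 * ℓ ^ 2 * (ν * ℓ + ℓ ^ 2) * w) *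
        s ^ 3 +
      32 * (8 * (ν * ℓ) * a + 16 * (ν * ℓ) ^ 2 * w ^ 2) * s ^ 2 +
      32 * (40960000 * ν ^ 2 + 25600 * ν ^ 2 * ℓ * s⁻¹ +
        256 * (ν ^ 2 + ℓ ^ 2) * (ν * ℓ + ℓ ^ 2)) * s ^ 4 + q ≤
    2000000000 * ((m + 1) * ν ^ 2 * ℓ * s ^ 3 + a * (ν * ℓ) * s ^ 2 + b * (ν + ℓ) * s +
      w ^ 2 * (ν ^ 2 * ℓ ^ 2 + ℓ ^ 4) * s ^ 2 + (ν * ℓ) ^ 3 * s ^ 4 + q) := by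
  have hν0 : 0 < ν := by linarith
  have hℓ0 : 0 < ℓ := by linarith
  have hss : s⁻¹ * s ^ 4 = s ^ 3 := by field_simp
  have t0 : ℓ ^ 2 * w ^ 2 * s ^ 2 ≤ ℓ ^ 4 * w ^ 2 * s ^ 2 := by
    have : ℓ ^ 2 ≤ ℓ ^ 4 := pow_le_pow_right₀ hℓ (by norm_num)
    gcongr
  have t1 : ν ^ 3 * m * s ^ 4 ≤ ν ^ 2 * ℓ * m * s ^ 3 := by
    calc ν ^ 3 * m * s ^ 4 = ν ^ 2 * m * s ^ 3 * (ν * s) := by ring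
      _ ≤ ν ^ 2 * m * s ^ 3 * ℓ := by gcongr; linarith
      _ = _ := by ring
  have t2 : ν ^ 2 * ℓ ^ 4 * s ^ 4 ≤ ν ^ 2 * ℓ * s ^ 3 := by
    calc ν ^ 2 * ℓ ^ 4 * s ^ 4 = ν ^ 2 * ℓ * s ^ 3 * (ℓ ^ 3 * s) := by ring
      _ ≤ ν ^ 2 * ℓ * s ^ 3 * 1 := by gcongr
      _ = _ := by ring
  have t3 : ∀ x : ℝ, w * x * s ≤ w ^ 2 + x ^ 2 * s ^ 2 := fun x => by
    nlinarith [sq_nonneg (w - x * s), sq_nonneg (w + x * s), sq_nonneg w, sq_nonneg (x * s)]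
  have t4 : ν ^ 2 * ℓ ^ 3 * w * s ^ 3 ≤ w ^ 2 * ν ^ 2 * ℓ ^ 2 * s ^ 2 + ν ^ 2 * ℓ * s ^ 3 := by
    calc ν ^ 2 * ℓ ^ 3 * w * s ^ 3 = ν ^ 2 * ℓ ^ 2 * s ^ 2 * (w * ℓ * s) := by ring
      _ ≤ ν ^ 2 * ℓ ^ 2 * s ^ 2 * (w ^ 2 + ℓ ^ 2 * s ^ 2) := by gcongr; exact t3 ℓ
      _ = w ^ 2 * ν ^ 2 * ℓ ^ 2 * s ^ 2 + ν ^ 2 * ℓ ^ 4 * s ^ 4 := by ring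
      _ ≤ _ := by gcongr
  have t5 : ν * ℓ ^ 4 * w * s ^ 3 ≤ w ^ 2 * ℓ ^ 4 * s ^ 2 + ν ^ 2 * ℓ * s ^ 3 := by
    calc ν * ℓ ^ 4 * w * s ^ 3 = ℓ ^ 4 * s ^ 2 * (w * ν * s) := by ring
      _ ≤ ℓ ^ 4 * s ^ 2 * (w ^ 2 + ν ^ 2 * s ^ 2) := by gcongr; exact t3 ν
      _ = w ^ 2 * ℓ ^ 4 * s ^ 2 + ν ^ 2 * ℓ ^ 4 * s ^ 4 := by ring
      _ ≤ _ := by gcongr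
  have t6 : ∀ i j : ℕ, i ≤ 3 → j ≤ 3 → ν ^ i * ℓ ^ j * s ^ 4 ≤ ν ^ 3 * ℓ ^ 3 * s ^ 4 := by
    intro i j hi hj
    gcongr
  have t7 : ℓ ^ 4 * s ^ 4 ≤ ν ^ 2 * ℓ * s ^ 3 := by
    refine le_trans ?_ t2
    have : 1 ≤ ν ^ 2 := one_le_pow₀ hν
    have h4 : 0 ≤ ℓ ^ 4 * s ^ 4 := by positivity
    nlinarith
  have t8 := t6 2 0 (by norm_num) (by norm_num)
  have t9 := t6 3 1 (by norm_num) (by norm_num)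
  have t10 := t6 2 2 (by norm_num) (by norm_num)
  have t11 := t6 1 3 (by norm_num) (by norm_num)
  have p1 : 0 ≤ ν ^ 2 * ℓ * s ^ 3 := by positivity
  have p2 : 0 ≤ m * (ν ^ 2 * ℓ * s ^ 3) := by positivity
  have p3 : 0 ≤ a * (ν * ℓ) * s ^ 2 := by positivity
  have p4 : 0 ≤ b * ν * s := by positivity
  have p4' : 0 ≤ b * ℓ * s := by positivity
  have p5 : 0 ≤ w ^ 2 * ν ^ 2 * ℓ ^ 2 * s ^ 2 := by positivity
  have p6 : 0 ≤ w ^ 2 * ℓ ^ 4 * s ^ 2 := by positivity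
  have p7 : 0 ≤ ν ^ 3 * ℓ ^ 3 * s ^ 4 := by positivity
  have e : 32 * (40960000 * ν ^ 2 + 25600 * ν ^ 2 * ℓ * s⁻¹ +
        256 * (ν ^ 2 + ℓ ^ 2) * (ν * ℓ + ℓ ^ 2)) * s ^ 4 =
      32 * (40960000 * (ν ^ 2 * ℓ ^ 0 * s ^ 4) + 25600 * (ν ^ 2 * ℓ * s ^ 3) +
        256 * (ν ^ 3 * ℓ ^ 1 * s ^ 4 + ν ^ 2 * ℓ ^ 2 * s ^ 4 + ν ^ 1 * ℓ ^ 3 * s ^ 4 +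
          ℓ ^ 4 * s ^ 4)) := by
    rw [← hss]
    ring
  rw [e]
  linarith

lemma sqrt_mul_sq_le {x y z : ℝ} (hy : 0 ≤ y) (hz : 0 ≤ z) (h : x ≤ y ^ 2) :
    √(x * z ^ 2) ≤ y * z := by
  refine Real.sqrt_le_iff.2 ⟨by positivity, ?_⟩
  rw [mul_pow]
  gcongr

/-- Spectral norm bound on the complement of the exceptional event of `exists_bad_event`. -/
lemma specNorm_le_of_good {N d : ℕ} (hN : 0 < N) (v : Fin N → ℝ) (g : Fin N → Fin d → ℝ)
    {S : Finset (Fin d → ℝ)} (hS : IsSphereNet S) {β₁ β₂ β₃ β₄ β₅ ν : ℝ} (hν : √d ≤ ν)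
    (hβ₁ : 0 ≤ β₁) (hβ₂ : 0 ≤ β₂) (hβ₃ : 0 ≤ β₃) (hβ₄ : 0 ≤ β₄) (hβ₅ : 0 ≤ β₅)
    (h₁ : |∑ i, v i ^ 2 * ∑ j, (g i j ^ 2 - 1)| ≤ β₁)
    (h₂ : ∀ u ∈ S, |∑ i, v i ^ 3 * ∑ j, u j * g i j| ≤ β₂)
    (h₃ : ∀ j, |∑ i, v i * ((∑ k, (g i k ^ 2 - 1)) * g i j)| ≤ β₃)
    (h₄ : ∀ u ∈ S, |∑ i, v i ^ 2 * ((∑ j, u j * g i j) ^ 2 - 1)| ≤ β₄)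
    (h₅ : ∀ u ∈ S, |∑ i, (∑ k, (g i k ^ 2 - 1)) * (∑ j, u j * g i j) ^ 2 - 2 * (N : ℝ)| ≤ β₅) :
    specNorm (specMat (gaussBasis (n := d + 1) v fun i j => (√N)⁻¹ * g i j) -
        (lpNorm 4 v ^ 4 - 3 / N) • vecMulVec (e1vec (d + 1)) (e1vec (d + 1))) ≤
      β₁ / N + 2 * β₂ / √N + ν * β₃ / √N ^ 3 + 32 * β₄ / N + 32 * β₅ / (N : ℝ) ^ 2 +
        |eucNorm v ^ 2 - 1| / N := by
  have hν0 : 0 ≤ ν := (Real.sqrt_nonneg _).trans hν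
  refine specNorm_specMat_sub_le hN v g hβ₁ (by positivity) (by positivity) (by positivity)
    (by positivity) h₁ ?_ ?_ ?_ ?_
  · refine hS.sum_sq_le_of_linear fun u hu => ?_
    convert h₂ u hu using 2
    simp only [Finset.mul_sum]
    rw [Finset.sum_comm]
    exact Finset.sum_congr rfl fun i _ => Finset.sum_congr rfl fun j _ => by ring
  · calc _ ≤ ∑ _j : Fin d, β₃ ^ 2 := Finset.sum_le_sum fun j _ => by
          rw [← sq_abs]
          have := h₃ j
          gcongr
      _ = (√d) ^ 2 * β₃ ^ 2 := by simp [Real.sq_sqrt]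
      _ ≤ ν ^ 2 * β₃ ^ 2 := by gcongr
      _ = (ν * β₃) ^ 2 := by ring
  · refine hS.abs_weighted_sum_sq_sub_le g _ hβ₄ fun u hu => ?_
    convert h₄ u hu using 2
    simp only [mul_sub, mul_one, Finset.sum_sub_distrib]
  · exact hS.abs_weighted_sum_sq_sub_le g _ hβ₅ h₅

lemma etaBound_eq {C : ℝ} {N n : ℕ} {v : Fin N → ℝ} {δ L : ℝ} (hL : 0 ≤ L)
    (hlog : Real.log (N / δ) = L) :
    etaBound C N n v δ = C * ((eucNorm v + 1) * √n ^ 2 * √L * (√N)⁻¹ ^ 3 +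
      lpNorm 4 v ^ 2 * (√n * √L) * (√N)⁻¹ ^ 2 + lpNorm 6 v ^ 3 * (√n + √L) * (√N)⁻¹ +
      supNorm v ^ 2 * (√n ^ 2 * √L ^ 2 + √L ^ 4) * (√N)⁻¹ ^ 2 +
      (√n * √L) ^ 3 * (√N)⁻¹ ^ 4 + |eucNorm v ^ 2 - 1| / N) := by
  have h32 : ∀ x : ℝ, 0 ≤ x → x ^ ((3 : ℝ) / 2) = √x ^ 3 := fun x hx => by
    rw [Real.sqrt_eq_rpow, ← Real.rpow_mul_natCast hx]
    norm_num
  have hn0 : (0 : ℝ) ≤ n := n.cast_nonneg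
  have hN0 : (0 : ℝ) ≤ N := N.cast_nonneg
  have h4 : ∀ x : ℝ, 0 ≤ x → √x ^ 4 = x ^ 2 := fun x hx => by
    rw [show √x ^ 4 = (√x ^ 2) ^ 2 by ring, Real.sq_sqrt hx]
  unfold etaBound
  rw [hlog, h32 _ hN0, h32 (n * L) (by positivity), Real.sqrt_mul hn0]
  simp only [inv_pow, h4 _ hN0, h4 _ hL, Real.sq_sqrt hn0, Real.sq_sqrt hN0, Real.sq_sqrt hL,
    div_eq_mul_inv]

lemma iidGaussVec_inv_eq_map {N d : ℕ} :
    iidGaussVec N d (N : NNReal)⁻¹ =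
      (iidGaussVec N d 1).map fun g i j => (√N)⁻¹ * g i j := by
  have h1 : gaussVec d (N : NNReal)⁻¹ = (gaussVec d 1).map fun x j => (√N)⁻¹ * x j := by
    unfold gaussVec
    rw [Measure.pi_map_pi (fun _ => by fun_prop)]
    congr 1
    funext j
    rw [gaussianReal_map_const_mul]
    congr 1
    · simp
    · ext
      simp [Real.sq_sqrt]
  have h2 := Measure.pi_map_pi (μ := fun _ : Fin N => gaussVec d 1)
    (f := fun _ x j => (√(N : ℝ))⁻¹ * x j)
    (fun _ => Measurable.aemeasurable (by fun_prop))
  unfold iidGaussVec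
  rw [h1]
  exact h2.symm

lemma sum_abs_le_sqrt_mul_eucNorm {k : ℕ} (v : Fin k → ℝ) : ∑ i, |v i| ≤ √k * eucNorm v := by
  unfold eucNorm
  have h := Finset.sum_mul_sq_le_sq_mul_sq Finset.univ (fun _ : Fin k => (1 : ℝ)) fun i => |v i|
  simp only [one_mul, one_pow, Finset.sum_const, Finset.card_univ, Fintype.card_fin,
    nsmul_eq_mul, mul_one, sq_abs] at h
  rw [← Real.sqrt_mul k.cast_nonneg]
  exact Real.le_sqrt_of_sq_le h

section Thresholds

variable {D L ν ℓ : ℝ}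

lemma sqrt_mul_le_of_sq_eq (hν0 : 0 ≤ ν) (hℓ0 : 0 ≤ ℓ) (hν : ν ^ 2 = D + 1)
    (hℓ : ℓ ^ 2 = L) : √(D * L) ≤ ν * ℓ := by
  refine Real.sqrt_le_iff.2 ⟨by positivity, ?_⟩
  rw [mul_pow, hν, hℓ]
  nlinarith [sq_nonneg ℓ]

lemma two_mul_add_le_four_mul_sq (hν1 : 1 ≤ ν) (hℓ1 : 1 ≤ ℓ) (hν : ν ^ 2 = D + 1)
    (hℓ : ℓ ^ 2 = L) : 2 * D + 2 * L ≤ 4 * (ν * ℓ) ^ 2 := by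
  have hν1' : 1 ≤ ν ^ 2 := one_le_pow₀ hν1
  have hℓ1' : 1 ≤ ℓ ^ 2 := one_le_pow₀ hℓ1
  rw [mul_pow]
  nlinarith

lemma diagonal_threshold_le {a w : ℝ} (hν0 : 0 ≤ ν) (hℓ0 : 0 ≤ ℓ) (hν : ν ^ 2 = D + 1)
    (hℓ : ℓ ^ 2 = L) (ha : 0 ≤ a) :
    2 * √(2 * L * (4 * D * a ^ 2)) + 2 * L * (4 * w ^ 2) ≤
      6 * (ν * ℓ) * a + 8 * ℓ ^ 2 * w ^ 2 := by
  have h : √(2 * L * (4 * D) * a ^ 2) ≤ 3 * (ν * ℓ) * a := by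
    refine sqrt_mul_sq_le (by positivity) ha ?_
    rw [← hℓ, mul_pow, mul_pow, hν]
    nlinarith [sq_nonneg ℓ, sq_nonneg (ℓ * ν), mul_pow ℓ ν 2]
  rw [← mul_assoc (2 * L) (4 * D), hℓ]
  linarith

lemma cubic_threshold_le {b : ℝ} (hν0 : 0 ≤ ν) (hℓ0 : 0 ≤ ℓ) (hν : ν ^ 2 = D + 1)
    (hℓ : ℓ ^ 2 = L) (hb : 0 ≤ b) :
    2 * √((2 * D + 2 * L) * (1 / 2 * b ^ 2)) ≤ 2 * (ν + ℓ) * b := by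
  have h : √((2 * D + 2 * L) * (1 / 2) * b ^ 2) ≤ (ν + ℓ) * b := by
    refine sqrt_mul_sq_le (by positivity) hb ?_
    nlinarith [mul_nonneg hν0 hℓ0]
  rw [← mul_assoc (2 * D + 2 * L)]
  linarith

lemma cross_threshold_le {M r w m s : ℝ} (hν0 : 0 ≤ ν) (hℓ0 : 0 ≤ ℓ) (hν : ν ^ 2 = D + 1)
    (hℓ : ℓ ^ 2 = L) (hr0 : 0 < r) (hr : r ^ 2 = M) (hm : 0 ≤ m) (hw : 0 ≤ w)
    (hs : s ≤ r * m) :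
    40960000 * (D + 1) / M * s + 2 * √(2 * L * (40960000 * D * m ^ 2)) +
      2 * L * (16 * (8 * (√(D * L) + L)) * w) ≤
      40960000 * ν ^ 2 * m * r⁻¹ + 19200 * (ν * ℓ) * m + 256 * ℓ ^ 2 * (ν * ℓ + ℓ ^ 2) * w := by
  have h : √(2 * L * (40960000 * D) * m ^ 2) ≤ 9600 * (ν * ℓ) * m := by
    refine sqrt_mul_sq_le (by positivity) hm ?_
    rw [← hℓ, mul_pow, mul_pow, hν]
    nlinarith [sq_nonneg ℓ, sq_nonneg (ℓ * ν), mul_pow ℓ ν 2]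
  have h1 : 40960000 * (D + 1) / M * s ≤ 40960000 * ν ^ 2 * m * r⁻¹ := by
    rw [← hν, ← hr]
    calc _ ≤ 40960000 * ν ^ 2 / r ^ 2 * (r * m) := by gcongr
      _ = _ := by field_simp
  have h2 : 2 * L * (16 * (8 * (√(D * L) + L)) * w) ≤ 256 * ℓ ^ 2 * (ν * ℓ + ℓ ^ 2) * w := by
    have h3 := sqrt_mul_le_of_sq_eq hν0 hℓ0 hν hℓ
    calc _ = 256 * ℓ ^ 2 * (√(D * L) + ℓ ^ 2) * w := by rw [hℓ]; ring
      _ ≤ _ := by gcongr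
  rw [← mul_assoc (2 * L) (40960000 * D)]
  linarith

lemma quadratic_threshold_le {a w : ℝ} (hν1 : 1 ≤ ν) (hℓ1 : 1 ≤ ℓ) (hν : ν ^ 2 = D + 1)
    (hℓ : ℓ ^ 2 = L) (ha : 0 ≤ a) :
    2 * √((2 * D + 2 * L) * (4 * a ^ 2)) + (2 * D + 2 * L) * (4 * w ^ 2) ≤
      8 * (ν * ℓ) * a + 16 * (ν * ℓ) ^ 2 * w ^ 2 := by
  have hK := two_mul_add_le_four_mul_sq hν1 hℓ1 hν hℓ
  have h : √((2 * D + 2 * L) * 4 * a ^ 2) ≤ 4 * (ν * ℓ) * a := by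
    refine sqrt_mul_sq_le (by positivity) ha ?_
    rw [mul_pow]
    linarith
  have h2 : (2 * D + 2 * L) * (4 * w ^ 2) ≤ 4 * (ν * ℓ) ^ 2 * (4 * w ^ 2) := by gcongr
  rw [← mul_assoc (2 * D + 2 * L)]
  linarith

lemma quartic_threshold_le {M r : ℝ} (hν1 : 1 ≤ ν) (hℓ1 : 1 ≤ ℓ) (hν : ν ^ 2 = D + 1)
    (hℓ : ℓ ^ 2 = L) (hr0 : 0 < r) (hr : r ^ 2 = M) :
    40960000 * (D + 1) / M * M + 2 * √((2 * D + 2 * L) * (40960000 * D * M)) +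
      (2 * D + 2 * L) * (16 * (8 * (√(D * L) + L))) ≤
      40960000 * ν ^ 2 + 25600 * ν ^ 2 * ℓ * r⁻¹⁻¹ +
        256 * (ν ^ 2 + ℓ ^ 2) * (ν * ℓ + ℓ ^ 2) := by
  have hν0 : 0 ≤ ν := by linarith
  have hℓ0 : 0 ≤ ℓ := by linarith
  have hK := two_mul_add_le_four_mul_sq hν1 hℓ1 hν hℓ
  have h1 : 40960000 * (D + 1) / M * M = 40960000 * ν ^ 2 := by
    rw [hν, ← hr]
    field_simp
  have hD : D ≤ ν ^ 2 := by linarith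
  have hD0 : 0 ≤ D := by
    have := one_le_pow₀ hν1 (n := 2)
    linarith
  have h2 : √((2 * D + 2 * L) * (40960000 * D) * r ^ 2) ≤ 12800 * ν ^ 2 * ℓ * r := by
    refine sqrt_mul_sq_le (by positivity) hr0.le ?_
    calc _ ≤ 4 * (ν * ℓ) ^ 2 * (40960000 * ν ^ 2) := by gcongr
      _ = _ := by ring
  have h3 : (2 * D + 2 * L) * (16 * (8 * (√(D * L) + L))) ≤
      2 * (ν ^ 2 + ℓ ^ 2) * (16 * (8 * (ν * ℓ + ℓ ^ 2))) := by
    have h4 := sqrt_mul_le_of_sq_eq hν0 hℓ0 hν hℓ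
    have h5 : 2 * D + 2 * L ≤ 2 * (ν ^ 2 + ℓ ^ 2) := by linarith
    have h6 : 0 ≤ L := hℓ ▸ sq_nonneg ℓ
    gcongr
    exact hℓ.ge
  rw [h1, ← hr, ← mul_assoc (2 * D + 2 * L), inv_inv]
  linarith

end Thresholds

/-- Outside an event of probability at most `δ`, the spectral norm is bounded by `etaBound`. -/
lemma exists_bad_event_specNorm {N d : ℕ} (hN : 12 ≤ N) (hdN : d + 1 ≤ N) (v : Fin N → ℝ) {δ : ℝ}
    (hδ0 : 0 < δ) (hδ : δ < 1) (hlog : Real.log (N / δ) ^ 7 ≤ N) :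
    ∃ bad : Set (Fin N → Fin d → ℝ), (iidGaussVec N d 1).real bad ≤ δ ∧ ∀ g ∉ bad,
      specNorm (specMat (gaussBasis (n := d + 1) v fun i j => (√N)⁻¹ * g i j) -
        (lpNorm 4 v ^ 4 - 3 / N) • vecMulVec (e1vec (d + 1)) (e1vec (d + 1))) ≤
      etaBound 2000000000 N (d + 1) v δ := by
  have hN0 : (0 : ℝ) < N := by
    have : 0 < N := by omega
    exact_mod_cast this
  have hN12 : (12 : ℝ) ≤ N := by exact_mod_cast hN
  set L := Real.log (N / δ) with hLdef
  have hL1 : 1 ≤ L := by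
    rw [hLdef, Real.le_log_iff_exp_le (by positivity), le_div_iff₀ hδ0]
    have := Real.exp_one_lt_d9
    nlinarith [Real.exp_pos 1]
  have hL0 : 0 < L := by linarith
  have hexp : Real.exp (-L) = δ / N := by
    rw [Real.exp_neg, hLdef, Real.exp_log (by positivity), inv_div]
  obtain ⟨S, hcard, hS⟩ := exists_sphere_net d
  obtain ⟨bad, hbad, hgood⟩ := exists_bad_event hN (by omega) v hL0 hδ0 hδ hexp hcard hS.1
  refine ⟨bad, hbad, fun g hg => ?_⟩
  obtain ⟨g1, g2, g3, g4, g5⟩ := hgood g hg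
  have hs0 := supNorm_nonneg v
  have ha0 : 0 ≤ lpNorm 4 v ^ 2 := sq_nonneg _
  have hb0 : 0 ≤ lpNorm 6 v ^ 3 := pow_nonneg (lpNorm_nonneg _ _) _
  have hm0 : 0 ≤ eucNorm v := Real.sqrt_nonneg _
  have ha : ∑ i, (v i ^ 2) ^ 2 = (lpNorm 4 v ^ 2) ^ 2 := by
    rw [← pow_mul, lpNorm_four_pow]
    exact Finset.sum_congr rfl fun i _ => by ring
  have hb : ∑ i, (v i ^ 3) ^ 2 = (lpNorm 6 v ^ 3) ^ 2 := by
    rw [lpNorm_six_cube, Real.sq_sqrt (Finset.sum_nonneg fun i _ => by positivity)]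
    exact Finset.sum_congr rfl fun i _ => by ring
  have hsum := sum_abs_le_sqrt_mul_eucNorm v
  rw [etaBound_eq hL0.le hLdef.symm]
  rw [ha] at g1 g4
  simp only [hb] at g2
  simp only [← eucNorm_sq] at g3
  generalize hw : supNorm v = w at *
  generalize ha' : lpNorm 4 v ^ 2 = a at *
  generalize hb' : lpNorm 6 v ^ 3 = b at *
  set m := eucNorm v with hm
  have hnc : ((d + 1 : ℕ) : ℝ) = d + 1 := by push_cast; ring
  have hr2 : √(N : ℝ) ^ 2 = N := Real.sq_sqrt hN0.le
  have hℓ2 : √L ^ 2 = L := Real.sq_sqrt hL0.le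
  have hν2 : √((d + 1 : ℕ) : ℝ) ^ 2 = d + 1 := by rw [hnc]; exact Real.sq_sqrt (by positivity)
  have hℓ1 : 1 ≤ √L := Real.one_le_sqrt.2 hL1
  have hν1 : 1 ≤ √((d + 1 : ℕ) : ℝ) := Real.one_le_sqrt.2 (by
    rw [hnc]
    linarith [d.cast_nonneg (α := ℝ)])
  have hr0 : 0 < √(N : ℝ) := Real.sqrt_pos.2 hN0
  have hνr : √((d + 1 : ℕ) : ℝ) ≤ √N := Real.sqrt_le_sqrt (by exact_mod_cast hdN)
  have hdν : √(d : ℝ) ≤ √((d + 1 : ℕ) : ℝ) := Real.sqrt_le_sqrt (by rw [hnc]; linarith)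
  have hℓr : √L ^ 3 ≤ √(N : ℝ) := by
    refine Real.le_sqrt_of_sq_le ?_
    calc (√L ^ 3) ^ 2 = L ^ 3 := by rw [← hℓ2]; ring_nf; simp
      _ ≤ L ^ 7 := pow_le_pow_right₀ hL1 (by norm_num)
      _ ≤ N := hlog
  generalize hν : √((d + 1 : ℕ) : ℝ) = ν at *
  generalize hℓ : √L = ℓ at *
  generalize hr : √(N : ℝ) = r at *
  have hν0 : 0 ≤ ν := by linarith
  have hℓ0 : 0 ≤ ℓ := by linarith
  have f1 := g1.trans (diagonal_threshold_le hν0 hℓ0 hν2 hℓ2 ha0)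
  have f2 := fun u hu => (g2 u hu).trans (cubic_threshold_le hν0 hℓ0 hν2 hℓ2 hb0)
  have f3 := fun j => (g3 j).trans
    (cross_threshold_le hν0 hℓ0 hν2 hℓ2 hr0 hr2 hm0 hs0 hsum)
  have f4 := fun u hu => (g4 u hu).trans (quadratic_threshold_le hν1 hℓ1 hν2 hℓ2 ha0)
  have f5 := fun u hu => (g5 u hu).trans (quartic_threshold_le hν1 hℓ1 hν2 hℓ2 hr0 hr2)
  have key := specNorm_le_of_good (by omega) v g hS hdν (by positivity) (by positivity)
    (by positivity) (by positivity) (by positivity) f1 f2 f3 f4 f5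
  rw [hr] at key
  refine key.trans (le_trans (le_of_eq ?_) (error_terms_le (q := |m ^ 2 - 1| / N) hν1 hℓ1
    (inv_pos.2 hr0) ?_ ?_ ha0 hb0 hm0 (by positivity)))
  · rw [← hr2]
    field_simp
    ring
  · rw [← div_eq_mul_inv, div_le_one hr0]
    exact hνr
  · rw [← div_eq_mul_inv, div_le_one hr0]
    exact hℓr

/-- with rows `y_iᵀ = (v_i, b_iᵀ)`, `b_i` i.i.d. `N(0, (1/N) I_{n-1})`, and
`M = ∑_i (‖y_i‖² - (n-1)/N) y_i y_iᵀ - (3/N) I_n`, there is a universal constant `C > 0`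
such that for every `δ ∈ (0,1)` with `N ≥ log⁷(N/δ)`, with probability at least `1 - δ`,
`‖M - (‖v‖₄⁴ - 3/N) e₁e₁ᵀ‖ ≤ η`. -/
theorem stmt_0 :
    ∃ C : ℝ, 0 < C ∧ ∃ N₀ : ℕ,
      ∀ (N n : ℕ) (v : Fin N → ℝ) (δ : ℝ), N₀ ≤ N → 1 ≤ n → n ≤ N → 0 < δ → δ < 1 →
        (Real.log (N / δ)) ^ 7 ≤ N →
        ENNReal.ofReal (1 - δ) ≤
          (iidGaussVec N (n - 1) ((N : NNReal))⁻¹)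
            {B | specNorm
                (specMat (gaussBasis v B)
                  - (lpNorm 4 v ^ 4 - 3 / N) • Matrix.vecMulVec (e1vec n) (e1vec n))
              ≤ etaBound C N n v δ} := by
  refine ⟨2000000000, by norm_num, 12, fun N n v δ hN hn hnN hδ0 hδ hlog => ?_⟩
  obtain ⟨d, rfl⟩ := Nat.exists_eq_add_of_le' hn
  obtain ⟨bad, hbad, hgood⟩ := exists_bad_event_specNorm hN hnN v hδ0 hδ hlog
  have hP : IsProbabilityMeasure (iidGaussVec N d 1) := by unfold iidGaussVec; infer_instance
  change _ ≤ iidGaussVec N d (N : NNReal)⁻¹ _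
  rw [iidGaussVec_inv_eq_map]
  refine le_trans ?_ (Measure.le_map_apply (Measurable.aemeasurable (by fun_prop)) _)
  refine le_trans ?_ (measure_mono (show badᶜ ⊆ _ from fun g hg => hgood g hg))
  rw [ENNReal.ofReal_sub _ hδ0.le, ENNReal.ofReal_one, tsub_le_iff_left]
  calc (1 : ENNReal) = iidGaussVec N d 1 (bad ∪ badᶜ) := by simp
    _ ≤ iidGaussVec N d 1 bad + iidGaussVec N d 1 badᶜ := measure_union_le _ _
    _ ≤ _ := by
      gcongr
      rw [← ofReal_measureReal]
      exact ENNReal.ofReal_le_ofReal hbad
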